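/- Let R = ℤ[√2]. Every binary quadratic form over R that is a sum of finitely many squares of linear forms over R is a sum of 5 squares of linear forms over R. -/

import Mathlib

/-!
Write `R = ℤ[√2]`. Two facts combine.

**Four squares in the odd case** (`four_of_odd`). Let `(α, β, γ)` stand for
`α x² + 2 β x y + γ y²`, positive semidefinite in both embeddings, with `α` not divisible by `√2` and
with `α`, `γ` congruent to rational integers modulo `2` (squares in `R` satisfy this congruence). Such
a form is a sum of four squares. Indeed, four squares amount to Lipschitz quaternions `a`, `b` over
`R` with norms `α`, `γ` and `tr (ā b) = 2 β`. After removal of the content, a pure quaternion of norm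
`α γ - β²` gives `q` of trace `2 β` and norm `α γ`. The maximal order `Quo` of the quaternion algebra
`(-1, -1)` over `ℚ(√2)` is norm-Euclidean (`Quo.exists_quo_rem`), so the right ideals on two
generators are principal and `q` factors as `ā b` with `a` of norm `α` (`Quo.exists_factor`); here
totally positive units are squares (`unit_sq`). The order has enough units modulo `√2` to move the
factors into the Lipschitz order (`Quo.exists_lip_factor`).

The pure quaternions come from sums of three squares: every totally positive `n` is, up to a
nonzero square, a sum of three squares in `R` (`three_of_TP`), and a gcd argument replaces a quaternion
with denominators by an integral one of the same trace and norm (`Quo.exists_integral`). As in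
Dirichlet's and Ankeny's proofs of the three squares theorem, `n` is represented by a totally positive
ternary form of Hessian determinant `2`, constructed from primes in arithmetic
progressions and quadratic reciprocity. Hermite reduction of its trace form in six variables gives two
vectors of value `1` (`two_min_vectors`), from which three squares are read off (`core_three`).

**Reduction to the odd case** (`exists_five`). If a sum of squares of linear forms has an odd diagonal
coefficient, four squares suffice. If both diagonal coefficients are even but some linear form has an
odd coefficient, splitting off its square leaves an odd diagonal coefficient: one plus four squares. If
all coefficients of the linear forms are divisible by `√2`, divide by `√2` and induct.
-/

/-- The binary quadratic form `α x² + β x y + γ y²` over a commutative ring `R` is a sum of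
`n` squares of linear forms over `R`. -/
def IsSumOfLinSq {R : Type*} [CommRing R] (n : ℕ) (α β γ : R) : Prop :=
  ∃ a b : Fin n → R,
    α = ∑ i, a i ^ 2 ∧ β = 2 * ∑ i, a i * b i ∧ γ = ∑ i, b i ^ 2

/-! ### The ring `ℤ[√2]` -/

namespace FiveSq

/-- The ring `ℤ[√2]`. -/
abbrev Rt := Zsqrtd 2

/-- The element `√2` of `ℤ[√2]`. -/
def rt : Rt := ⟨0, 1⟩

@[simp] lemma rt_re : rt.re = 0 := rfl
@[simp] lemma rt_im : rt.im = 1 := rfl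

lemma rt_sq : rt ^ 2 = 2 := by
  rw [sq]; ext <;> simp

lemma rt_mul_rt : rt * rt = 2 := by
  ext <;> simp

/-- The real embedding of `ℤ[√2]` with `√2 ↦ √2`. -/
noncomputable def sA : Rt →+* ℝ := Zsqrtd.lift ⟨√2, by norm_num⟩

/-- The real embedding of `ℤ[√2]` with `√2 ↦ -√2`. -/
noncomputable def sB : Rt →+* ℝ := Zsqrtd.lift ⟨-√2, by norm_num⟩

lemma sA_apply (x : Rt) : sA x = x.re + x.im * √2 := by
  simp [sA, Zsqrtd.lift]

lemma sB_apply (x : Rt) : sB x = x.re - x.im * √2 := by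
  simp [sB, Zsqrtd.lift]; ring

lemma sA_mul_sB (x : Rt) : sA x * sB x = (x.norm : ℝ) := by
  rw [sA_apply, sB_apply, Zsqrtd.norm_def]
  push_cast
  have h : √2 * √2 = (2 : ℝ) := by norm_num
  linear_combination (-(x.im : ℝ) * x.im) * h

lemma sA_add_sB (x : Rt) : sA x + sB x = 2 * (x.re : ℝ) := by
  rw [sA_apply, sB_apply]; ring

lemma sq_ne_two_mul_sq {a b : ℤ} (h : a ^ 2 = 2 * b ^ 2) : a = 0 ∧ b = 0 := by
  by_cases hb : b = 0
  · subst hb; simpa using h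
  · exfalso
    have h2 : (√2 : ℝ) = |(a : ℝ) / b| := by
      rw [← Real.sqrt_sq_eq_abs]
      congr 1
      have : (b : ℝ) ≠ 0 := by exact_mod_cast hb
      field_simp
      exact_mod_cast (by linarith : 2 * b ^ 2 = a ^ 2)
    refine irrational_sqrt_two ⟨|(a : ℚ) / b|, ?_⟩
    rw [h2]; push_cast; rfl

lemma norm_eq_zero' {x : Rt} (h : x.norm = 0) : x = 0 := by
  rw [Zsqrtd.norm_def] at h
  have := sq_ne_two_mul_sq (a := x.re) (b := x.im) (by linarith [sq x.re, sq x.im])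
  ext <;> simp [this]

lemma norm_ne_zero' {x : Rt} (h : x ≠ 0) : x.norm ≠ 0 := fun h' => h (norm_eq_zero' h')

lemma sA_ne_zero {x : Rt} (h : x ≠ 0) : sA x ≠ 0 := by
  intro h'
  have := sA_mul_sB x
  rw [h', zero_mul] at this
  exact norm_ne_zero' h (by exact_mod_cast this.symm)

lemma sB_ne_zero {x : Rt} (h : x ≠ 0) : sB x ≠ 0 := by
  intro h'
  have := sA_mul_sB x
  rw [h', mul_zero] at this
  exact norm_ne_zero' h (by exact_mod_cast this.symm)

instance : Nontrivial Rt := ⟨0, 1, by intro h; have := congrArg Zsqrtd.re h; simp at this⟩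

instance : NoZeroDivisors Rt where
  eq_zero_or_eq_zero_of_mul_eq_zero {a b} h := by
    by_contra! hc
    have := mul_ne_zero (sA_ne_zero hc.1) (sA_ne_zero hc.2)
    rw [← map_mul, h, map_zero] at this
    exact this rfl

instance : IsDomain Rt := NoZeroDivisors.to_isDomain Rt

lemma rt_ne_zero : rt ≠ 0 := by
  intro h; have := congrArg Zsqrtd.im h; simp at this

lemma two_ne_zero' : (2 : Rt) ≠ 0 := by
  intro h; have := congrArg Zsqrtd.re h; simp at this

/-- Total positivity in `ℤ[√2]`. -/
def TP (x : Rt) : Prop := 0 < sA x ∧ 0 < sB x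

lemma TP.mul {x y : Rt} (hx : TP x) (hy : TP y) : TP (x * y) :=
  ⟨by rw [map_mul]; exact mul_pos hx.1 hy.1, by rw [map_mul]; exact mul_pos hx.2 hy.2⟩

lemma TP.add {x y : Rt} (hx : TP x) (hy : TP y) : TP (x + y) :=
  ⟨by rw [map_add]; exact add_pos hx.1 hy.1, by rw [map_add]; exact add_pos hx.2 hy.2⟩

lemma TP.of_mul {x y : Rt} (hx : TP x) (hxy : TP (x * y)) : TP y := by
  unfold TP at *
  rw [map_mul, map_mul] at hxy
  exact ⟨(mul_pos_iff_of_pos_left hx.1).1 hxy.1, (mul_pos_iff_of_pos_left hx.2).1 hxy.2⟩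

lemma TP.ne_zero {x : Rt} (hx : TP x) : x ≠ 0 := by
  rintro rfl; simpa using hx.1

lemma TP.re_pos {x : Rt} (hx : TP x) : 0 < x.re := by
  have := sA_add_sB x
  have h2 : (0 : ℝ) < x.re := by linarith [hx.1, hx.2]
  exact_mod_cast h2

lemma TP.norm_pos {x : Rt} (hx : TP x) : 0 < x.norm := by
  have := mul_pos hx.1 hx.2
  rw [sA_mul_sB] at this
  exact_mod_cast this

lemma TP_of {x : Rt} (h : 0 < x.re) (h2 : 0 < x.norm) : TP x := by
  have e1 : 0 < sA x * sB x := by rw [sA_mul_sB]; exact_mod_cast h2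
  have e2 : 0 < sA x + sB x := by rw [sA_add_sB]; positivity
  rcases pos_and_pos_or_neg_and_neg_of_mul_pos e1 with h | h
  · exact h
  · linarith [h.1, h.2]

lemma TP_iff {x : Rt} : TP x ↔ 0 < x.re ∧ 0 < x.norm := ⟨fun h => ⟨h.re_pos, h.norm_pos⟩, fun h => TP_of h.1 h.2⟩

lemma TP_sq {x : Rt} (h : x ≠ 0) : TP (x ^ 2) :=
  ⟨by rw [map_pow]; have := sA_ne_zero h; positivity, by rw [map_pow]; have := sB_ne_zero h; positivity⟩

lemma TP_intCast {a : ℤ} (h : 0 < a) : TP (a : Rt) := by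
  refine TP_of (by simpa) ?_
  rw [Zsqrtd.norm_intCast]; positivity

lemma TP.star {x : Rt} (hx : TP x) : TP (star x) := by
  rw [TP_iff] at *
  simpa [Zsqrtd.norm_conj] using hx

lemma TP_of_nonneg {x : Rt} (h : x ≠ 0) (h1 : 0 ≤ sA x) (h2 : 0 ≤ sB x) : TP x :=
  ⟨lt_of_le_of_ne h1 (sA_ne_zero h).symm, lt_of_le_of_ne h2 (sB_ne_zero h).symm⟩

/-- Divisibility by `√2` is evenness of the rational part. -/
lemma rt_dvd_iff {x : Rt} : rt ∣ x ↔ Even x.re := by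
  constructor
  · rintro ⟨y, rfl⟩; simp
  · rintro ⟨k, hk⟩
    refine ⟨⟨x.im, k⟩, ?_⟩
    ext <;> simp [hk]; ring

lemma two_dvd_iff {x : Rt} : (2 : Rt) ∣ x ↔ Even x.re ∧ Even x.im := by
  have := Zsqrtd.intCast_dvd (d := 2) 2 x
  push_cast at this
  rw [this, even_iff_two_dvd, even_iff_two_dvd]

lemma im_sq_even (x : Rt) : Even (x ^ 2).im := by
  rw [sq]; simp [mul_comm]

end FiveSq

/-! ### Hermite reduction of integral forms -/

namespace FiveSq
open Matrix

lemma quad_conj {m : ℕ} (A U : Matrix (Fin m) (Fin m) ℤ) (x : Fin m → ℤ) :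
    x ⬝ᵥ (Uᵀ * A * U) *ᵥ x = (U *ᵥ x) ⬝ᵥ A *ᵥ (U *ᵥ x) := by
  simp only [← mulVec_mulVec, dotProduct_mulVec, vecMul_transpose]

/-- The integral Schur complement of the upper left entry. -/
def schur {n : ℕ} (A : Matrix (Fin (n + 1)) (Fin (n + 1)) ℤ) : Matrix (Fin n) (Fin n) ℤ :=
  Matrix.of fun i j => A 0 0 * A i.succ j.succ - A 0 i.succ * A 0 j.succ

lemma schur_det {n : ℕ} (A : Matrix (Fin (n + 1)) (Fin (n + 1)) ℤ) (hA : A.IsSymm) :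
    A 0 0 * (schur A).det = A 0 0 ^ n * A.det := by
  let P : Matrix (Fin (n + 1)) (Fin (n + 1)) ℤ := Matrix.of (Fin.cons (Fin.cons 1 0)
    (fun i => Fin.cons (- A 0 i.succ) (fun j => if i = j then A 0 0 else 0)))
  have hP : P.det = A 0 0 ^ n := by
    rw [det_succ_row_zero, Fin.sum_univ_succ]
    have h1 : P.submatrix (Fin.succ) (Fin.succAbove 0) = Matrix.diagonal (fun _ => A 0 0) := by
      ext i j
      simp [P, Matrix.diagonal_apply]
    rw [h1, det_diagonal]
    simp [P]
  have hPA : (P * A).det = A 0 0 * (schur A).det := by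
    rw [det_succ_column_zero, Fin.sum_univ_succ]
    have hz : ∀ i : Fin n, (P * A) i.succ 0 = 0 := by
      intro i
      rw [mul_apply, Fin.sum_univ_succ]
      simp [P]
      rw [hA.apply]; ring
    have h1 : (P * A).submatrix (Fin.succAbove 0) Fin.succ = schur A := by
      ext i j
      rw [submatrix_apply, mul_apply, Fin.sum_univ_succ]
      simp [P, schur]; ring
    have h2 : (P * A) 0 0 = A 0 0 := by
      rw [mul_apply, Fin.sum_univ_succ]; simp [P]
    rw [h1, h2]
    simp [hz]
  rw [← hPA, det_mul, hP]

lemma schur_symm {n : ℕ} (A : Matrix (Fin (n + 1)) (Fin (n + 1)) ℤ) (hA : A.IsSymm) :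
    (schur A).IsSymm := by
  ext i j
  simp only [schur, transpose_apply, of_apply]
  rw [hA.apply i.succ j.succ]; ring

/-- Completing the square. -/
lemma schur_quad {n : ℕ} (A : Matrix (Fin (n + 1)) (Fin (n + 1)) ℤ) (hA : A.IsSymm) (l : ℤ)
    (y : Fin n → ℤ) :
    A 0 0 * ((Fin.cons l y : Fin (n + 1) → ℤ) ⬝ᵥ A *ᵥ (Fin.cons l y : Fin (n + 1) → ℤ)) =
      (A 0 0 * l + ∑ i, A 0 i.succ * y i) ^ 2 + y ⬝ᵥ schur A *ᵥ y := by
  have e1 : y ⬝ᵥ schur A *ᵥ y = A 0 0 * (∑ i, ∑ j, y i * (A i.succ j.succ * y j)) -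
      (∑ i, A 0 i.succ * y i) ^ 2 := by
    rw [sq, Finset.sum_mul_sum, Finset.mul_sum, ← Finset.sum_sub_distrib]
    simp only [dotProduct, mulVec, schur, of_apply, Finset.mul_sum]
    refine Finset.sum_congr rfl fun i _ => ?_
    rw [← Finset.sum_sub_distrib]
    refine Finset.sum_congr rfl fun j _ => ?_
    ring
  have e2 : ((Fin.cons l y : Fin (n + 1) → ℤ) ⬝ᵥ A *ᵥ (Fin.cons l y : Fin (n + 1) → ℤ)) =
      A 0 0 * l ^ 2 + 2 * l * (∑ i, A 0 i.succ * y i) +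
        (∑ i, ∑ j, y i * (A i.succ j.succ * y j)) := by
    simp only [dotProduct, mulVec, Fin.sum_univ_succ, Fin.cons_zero, Fin.cons_succ, mul_add,
      Finset.sum_add_distrib, Finset.mul_sum]
    have : ∀ i : Fin n, A i.succ 0 = A 0 i.succ := fun i => hA.apply _ _
    simp only [this]
    have e3 : ∑ x, y x * (A 0 x.succ * l) = ∑ x, l * (A 0 x.succ * y x) :=
      Finset.sum_congr rfl fun _ _ => by ring
    have e4 : ∑ x, 2 * l * (A 0 x.succ * y x) = 2 * ∑ x, l * (A 0 x.succ * y x) := by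
      rw [Finset.mul_sum]; exact Finset.sum_congr rfl fun _ _ => by ring
    rw [e3, e4]; ring
  rw [e1, e2]; ring

lemma exists_round (a s : ℤ) (ha : 0 < a) : ∃ l : ℤ, 4 * (a * l + s) ^ 2 ≤ a ^ 2 := by
  refine ⟨- ((2 * s + a) / (2 * a)), ?_⟩
  have h1 := Int.emod_add_mul_ediv (2 * s + a) (2 * a)
  have h2 := Int.emod_nonneg (2 * s + a) (b := 2 * a) (by omega)
  have h3 := Int.emod_lt_of_pos (2 * s + a) (b := 2 * a) (by omega)
  set r := (2 * s + a) % (2 * a)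
  set q := (2 * s + a) / (2 * a)
  have : 2 * (a * -q + s) = r - a := by linarith
  have h4 : (2 * (a * -q + s)) ^ 2 ≤ a ^ 2 := by
    rw [this]; nlinarith
  linarith

/-- Hermite's bound: every positive definite integral form in `n + 1` variables has a basis whose
first vector has value at most `(4/3)^(n/2) det^(1/(n+1))`. The value is raised to the power `n + 1`
so that everything stays integral. -/
def HermiteBound (n : ℕ) : Prop :=
  ∀ A : Matrix (Fin (n + 1)) (Fin (n + 1)) ℤ, A.IsSymm →
    (∀ x : Fin (n + 1) → ℤ, x ≠ 0 → 0 < x ⬝ᵥ A *ᵥ x) →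
    ∃ U : Matrix (Fin (n + 1)) (Fin (n + 1)) ℤ, IsUnit U.det ∧
      3 ^ (∑ i ∈ Finset.range (n + 1), i) * (U.col 0 ⬝ᵥ A *ᵥ U.col 0) ^ (n + 1) ≤
        4 ^ (∑ i ∈ Finset.range (n + 1), i) * A.det

/-- The induction step of Hermite's argument. The first vector, of value `a`, is chosen minimal among
the first vectors of bases; `b` is the value of the Schur complement at the second vector, to which
`HermiteBound n` applies. The second vector is reduced modulo the first, and minimality of `a` gives
`3 a² ≤ 4 b`. -/
lemma hermite_step {n : ℕ} (ih : HermiteBound n) (A : Matrix (Fin (n + 2)) (Fin (n + 2)) ℤ)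
    (hA : A.IsSymm) (hpos : ∀ x : Fin (n + 2) → ℤ, x ≠ 0 → 0 < x ⬝ᵥ A *ᵥ x) :
    ∃ (U : Matrix (Fin (n + 2)) (Fin (n + 2)) ℤ) (a b : ℤ), IsUnit U.det ∧
      a = U.col 0 ⬝ᵥ A *ᵥ U.col 0 ∧ 0 < a ∧ 3 * a ^ 2 ≤ 4 * b ∧
      4 * a * (U.col 1 ⬝ᵥ A *ᵥ U.col 1) ≤ a ^ 2 + 4 * b ∧
      3 ^ (∑ i ∈ Finset.range (n + 1), i) * b ^ (n + 1) ≤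
        4 ^ (∑ i ∈ Finset.range (n + 1), i) * (a ^ n * A.det) := by
  have hcol : ∀ (U : Matrix (Fin (n + 2)) (Fin (n + 2)) ℤ), IsUnit U.det → ∀ j, U.col j ≠ 0 := by
    intro U hU j h
    have : U.det = 0 := det_eq_zero_of_column_eq_zero j (fun i => congrFun h i)
    rw [this] at hU
    exact not_isUnit_zero hU
  -- a basis with minimal first vector
  obtain ⟨U₀, hU₀, hmin⟩ : ∃ U₀ : Matrix (Fin (n + 2)) (Fin (n + 2)) ℤ, IsUnit U₀.det ∧
      ∀ U : Matrix (Fin (n + 2)) (Fin (n + 2)) ℤ, IsUnit U.det →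
        (U₀.col 0 ⬝ᵥ A *ᵥ U₀.col 0) ≤ (U.col 0 ⬝ᵥ A *ᵥ U.col 0) := by
    obtain ⟨U, hU, h⟩ := exists_minimalFor_of_wellFoundedLT
      (fun U : Matrix (Fin (n + 2)) (Fin (n + 2)) ℤ => IsUnit U.det)
      (fun U => (U.col 0 ⬝ᵥ A *ᵥ U.col 0).toNat) ⟨1, by simp⟩
    refine ⟨U, hU, fun V hV => ?_⟩
    have h1 := hpos _ (hcol U hU 0)
    have h2 := hpos _ (hcol V hV 0)
    by_contra! hc
    have := h hV (by simp only; omega)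
    simp only at this
    omega
  set A' := U₀ᵀ * A * U₀ with hA'
  have hA's : A'.IsSymm := by
    simp only [Matrix.IsSymm, hA', transpose_mul, transpose_transpose, hA.eq, Matrix.mul_assoc]
  have hcol0 : ∀ (V : Matrix (Fin (n + 2)) (Fin (n + 2)) ℤ) j, U₀ *ᵥ V.col j = (U₀ * V).col j := by
    intro V j; ext i; simp [mulVec, mul_apply, dotProduct]
  have hq : ∀ x, x ⬝ᵥ A' *ᵥ x = (U₀ *ᵥ x) ⬝ᵥ A *ᵥ (U₀ *ᵥ x) := quad_conj A U₀
  have hpos' : ∀ x : Fin (n + 2) → ℤ, x ≠ 0 → 0 < x ⬝ᵥ A' *ᵥ x := by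
    intro x hx
    rw [hq]
    apply hpos
    intro h0
    apply hx
    exact eq_zero_of_mulVec_eq_zero hU₀.ne_zero h0
  have hdet : A'.det = A.det := by
    rw [hA', det_mul, det_mul, det_transpose]
    have : U₀.det * U₀.det = 1 := by
      rcases Int.isUnit_iff.1 hU₀ with h | h <;> rw [h] <;> norm_num
    linear_combination A.det * this
  have ha : A' 0 0 = U₀.col 0 ⬝ᵥ A *ᵥ U₀.col 0 := by
    have := hq (Pi.single 0 1)
    rw [mulVec_single_one, mulVec_single_one] at this
    rw [← this]; simp
  have hapos : 0 < A' 0 0 := by rw [ha]; exact hpos _ (hcol _ hU₀ 0)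
  -- positivity of the Schur complement
  have hBpos : ∀ y : Fin (n + 1) → ℤ, y ≠ 0 → 0 < y ⬝ᵥ schur A' *ᵥ y := by
    intro y hy
    have h1 := schur_quad A' hA's (- ∑ i, A' 0 i.succ * y i) (A' 0 0 • y)
    have h2 := hpos' (Fin.cons (- ∑ i, A' 0 i.succ * y i) (A' 0 0 • y)) (by
      intro h0
      apply hy
      funext i
      have := congrFun h0 i.succ
      simp only [Fin.cons_succ, Pi.smul_apply, smul_eq_mul, Pi.zero_apply, mul_eq_zero] at this
      rcases this with h | h
      · omega
      · simpa using h)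
    have h3 : ∑ i, A' 0 i.succ * (A' 0 0 • y) i = A' 0 0 * ∑ i, A' 0 i.succ * y i := by
      rw [Finset.mul_sum]
      refine Finset.sum_congr rfl fun i _ => ?_
      simp only [Pi.smul_apply, smul_eq_mul]; ring
    rw [h3, mulVec_smul, smul_dotProduct, dotProduct_smul, smul_eq_mul, smul_eq_mul] at h1
    have h4 : 0 < A' 0 0 * (A' 0 0 * (y ⬝ᵥ schur A' *ᵥ y)) := by
      nlinarith [mul_pos hapos h2]
    exact pos_of_mul_pos_right (pos_of_mul_pos_right h4 hapos.le) hapos.le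
  obtain ⟨U', hU', hb⟩ := ih (schur A') (schur_symm A' hA's) hBpos
  obtain ⟨l, hl⟩ := exists_round (A' 0 0) (∑ i, A' 0 i.succ * U'.col 0 i) hapos
  let V : Matrix (Fin (n + 2)) (Fin (n + 2)) ℤ := Matrix.of (Fin.cons
    (Fin.cons 1 (Fin.cons l 0)) (fun i => Fin.cons 0 (U' i)))
  have hV : V.det = U'.det := by
    rw [det_succ_column_zero, Fin.sum_univ_succ]
    have h1 : V.submatrix (Fin.succAbove 0) Fin.succ = U' := by
      ext i j; simp [V]
    rw [h1]; simp [V]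
  have hV0 : V.col 0 = Pi.single 0 1 := by
    ext i; refine Fin.cases ?_ (fun i => ?_) i <;> simp [V]
  have hV1 : V.col 1 = Fin.cons l (U'.col 0) := by
    ext i
    refine Fin.cases ?_ (fun i => ?_) i
    · change V 0 (Fin.succ 0) = _
      simp [V]
    · change V i.succ (Fin.succ 0) = _
      simp [V]
  have hW : IsUnit (U₀ * V).det := by
    rw [det_mul, hV]; exact hU₀.mul hU'
  have hW0 : (U₀ * V).col 0 = U₀.col 0 := by
    rw [← hcol0, hV0, mulVec_single_one]
  have hW1 := schur_quad A' hA's l (U'.col 0)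
  rw [← hV1, hq, hcol0] at hW1
  have hle : A' 0 0 ≤ (U₀ * V).col 1 ⬝ᵥ A *ᵥ (U₀ * V).col 1 := by
    have hs := hmin ((U₀ * V).submatrix id (Equiv.swap 0 1)) (by
      rw [det_permute']
      refine IsUnit.mul ?_ hW
      exact (Equiv.Perm.sign (Equiv.swap (0 : Fin (n + 2)) 1)).isUnit.map (Int.castRingHom ℤ))
    have : ((U₀ * V).submatrix id (Equiv.swap 0 1)).col 0 = (U₀ * V).col 1 := by
      ext i; simp
    rw [this] at hs
    rw [ha]; exact hs
  refine ⟨U₀ * V, A' 0 0, U'.col 0 ⬝ᵥ schur A' *ᵥ U'.col 0, hW, by rw [ha, hW0], hapos, ?_, ?_, ?_⟩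
  · nlinarith [mul_le_mul_of_nonneg_left hle hapos.le]
  · nlinarith
  · have hs := schur_det A' hA's
    rw [hdet] at hs
    have : (schur A').det = A' 0 0 ^ n * A.det := by
      apply mul_left_cancel₀ hapos.ne'
      rw [hs]; ring
    rw [← this]; exact hb

theorem hermite_bound (n : ℕ) : HermiteBound n := by
  induction n with
  | zero =>
    intro A _ _
    refine ⟨1, by simp, ?_⟩
    simp [dotProduct, mulVec]
  | succ n ih =>
    intro A hA hpos
    obtain ⟨U, a, b, hU, ha, hapos, h1, -, h3⟩ := hermite_step ih A hA hpos
    refine ⟨U, hU, ?_⟩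
    rw [← ha, Finset.sum_range_succ]
    set e := ∑ i ∈ Finset.range (n + 1), i
    have h4 : (3 * a ^ 2) ^ (n + 1) ≤ (4 * b) ^ (n + 1) := pow_le_pow_left₀ (by positivity) h1 _
    have h5 : a ^ n * (3 ^ (e + (n + 1)) * a ^ (n + 1 + 1)) ≤
        a ^ n * (4 ^ (e + (n + 1)) * A.det) := by
      calc a ^ n * (3 ^ (e + (n + 1)) * a ^ (n + 1 + 1)) = 3 ^ e * (3 * a ^ 2) ^ (n + 1) := by ring
        _ ≤ 3 ^ e * (4 * b) ^ (n + 1) := by gcongr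
        _ = 4 ^ (n + 1) * (3 ^ e * b ^ (n + 1)) := by ring
        _ ≤ 4 ^ (n + 1) * (4 ^ e * (a ^ n * A.det)) := by gcongr
        _ = _ := by ring
    exact le_of_mul_le_mul_left h5 (by positivity)

/-- A positive definite form in six variables of Gram determinant `2048` whose values are
divisible by `4` takes the value `4` at two vectors that differ by more than a sign. -/
theorem hermite_six (A : Matrix (Fin 6) (Fin 6) ℤ) (hA : A.IsSymm)
    (hpos : ∀ x : Fin 6 → ℤ, x ≠ 0 → 0 < x ⬝ᵥ A *ᵥ x) (hdet : A.det = 2048)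
    (h4 : ∀ x : Fin 6 → ℤ, 4 ∣ x ⬝ᵥ A *ᵥ x) :
    ∃ x y : Fin 6 → ℤ, x ⬝ᵥ A *ᵥ x = 4 ∧ y ⬝ᵥ A *ᵥ y = 4 ∧ x ≠ y ∧ x ≠ -y := by
  obtain ⟨U, a, b, hU, ha, hapos, h1, h2, h3⟩ := hermite_step (hermite_bound 4) A hA hpos
  have hx := h4 (U.col 0)
  have hy := h4 (U.col 1)
  rw [← ha] at hx
  simp only [Finset.sum_range_succ, Finset.sum_range_zero, hdet] at h3
  norm_num at h3
  have hba : 0 < b := by nlinarith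
  have ha8 : a < 8 := by
    by_contra! hc
    have e1 : (3 * a ^ 2) ^ 5 ≤ (4 * b) ^ 5 := pow_le_pow_left₀ (by positivity) h1 _
    have e2 : 8 ^ 6 * a ^ 4 ≤ a ^ 10 := by
      calc 8 ^ 6 * a ^ 4 ≤ a ^ 6 * a ^ 4 := by gcongr
        _ = a ^ 10 := by ring
    have e3 : 0 < a ^ 4 := by positivity
    ring_nf at e1 e2 h3
    linarith
  have ha4 : a = 4 := by omega
  subst ha4
  have hb : b < 25 := by
    by_contra! hc
    have : 25 ^ 5 ≤ b ^ 5 := by gcongr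
    linarith
  have hq : U.col 1 ⬝ᵥ A *ᵥ U.col 1 = 4 := by
    have hne : U.col 1 ≠ 0 := by
      intro h
      have : U.det = 0 := det_eq_zero_of_column_eq_zero 1 (fun i => congrFun h i)
      rw [this] at hU
      exact not_isUnit_zero hU
    have := hpos _ hne
    omega
  refine ⟨U.col 0, U.col 1, ha.symm, hq, ?_, ?_⟩
  · intro h
    have : U.det = 0 := det_zero_of_column_eq (i := 0) (j := 1) (by decide) (fun i => congrFun h i)
    rw [this] at hU
    exact not_isUnit_zero hU
  · intro h
    have : (U.updateCol 1 (U.col 0)).det = 0 := det_zero_of_column_eq (i := 0) (j := 1) (by decide)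
      (fun i => by simp)
    have h5 : U.updateCol 1 (U.col 0) = U.updateCol 1 ((-1 : ℤ) • U.col 1) := by
      rw [h]; simp
    rw [h5, det_updateCol_smul] at this
    have h6 : U.updateCol 1 (U.col 1) = U := by
      ext i j; by_cases hj : j = 1 <;> simp [hj]
    rw [h6] at this
    have : U.det = 0 := by linarith
    rw [this] at hU
    exact not_isUnit_zero hU

end FiveSq

/-! ### Ternary forms of determinant two and sums of three squares -/

namespace FiveSq
open Matrix

/-- The matrix over `ℤ` of the restriction of scalars of a matrix over `ℤ[√2]` has determinant
the norm of the determinant. -/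
lemma det_restrict (G : Matrix (Fin 3) (Fin 3) Rt) :
    (fromBlocks (G.map Zsqrtd.re) (G.map fun x => 2 * x.im) (G.map Zsqrtd.im)
      (G.map Zsqrtd.re)).det = G.det.norm := by
  set M₀ : Matrix (Fin 3) (Fin 3) ℝ := G.map (fun x => (x.re : ℝ))
  set M₁ : Matrix (Fin 3) (Fin 3) ℝ := G.map (fun x => (x.im : ℝ))
  have h2 : √2 * √2 = (2 : ℝ) := by norm_num
  let S : Matrix (Fin 3 ⊕ Fin 3) (Fin 3 ⊕ Fin 3) ℝ := fromBlocks 1 (√2 • 1) 1 (-√2 • 1)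
  have hS : S.det ≠ 0 := by
    simp only [S]
    rw [det_fromBlocks_one₁₁, Matrix.one_mul, ← sub_smul, det_smul, det_one, mul_one]
    have : (-√2 - √2 : ℝ) ≠ 0 := by
      have : 0 < √2 := by positivity
      linarith
    exact pow_ne_zero _ this
  have hA : G.map sA = M₀ + √2 • M₁ := by
    ext i j; simp [M₀, M₁, sA_apply, mul_comm]
  have hB : G.map sB = M₀ - √2 • M₁ := by
    ext i j; simp [M₀, M₁, sB_apply, mul_comm]
  have key : S * fromBlocks M₀ ((2 : ℝ) • M₁) M₁ M₀ = fromBlocks (G.map sA) 0 0 (G.map sB) * S := by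
    rw [hA, hB]
    simp only [S, fromBlocks_multiply]
    congr 1
    · simp
    · ext i j
      simp
      linear_combination (-M₁ i j) * h2
    · simp [sub_eq_add_neg]
    · ext i j
      simp
      linear_combination (-M₁ i j) * h2
  have hd := congrArg det key
  rw [det_mul, det_mul, mul_comm, det_fromBlocks_zero₂₁] at hd
  have hd2 := mul_right_cancel₀ hS hd
  have e1 : (G.map sA).det = sA G.det := by
    rw [RingHom.map_det]; rfl
  have e2 : (G.map sB).det = sB G.det := by
    rw [RingHom.map_det]; rfl
  rw [e1, e2, sA_mul_sB] at hd2
  have e3 : ((fromBlocks (G.map Zsqrtd.re) (G.map fun x => 2 * x.im) (G.map Zsqrtd.im)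
      (G.map Zsqrtd.re)).det : ℝ) = (fromBlocks M₀ ((2 : ℝ) • M₁) M₁ M₀).det := by
    have := RingHom.map_det (Int.castRingHom ℝ) (fromBlocks (G.map Zsqrtd.re)
      (G.map fun x => 2 * x.im) (G.map Zsqrtd.im) (G.map Zsqrtd.re))
    rw [eq_intCast] at this
    rw [this]
    congr 1
    ext (i | i) (j | j) <;> simp [M₀, M₁]
  rw [hd2] at e3
  exact_mod_cast e3

lemma quad_restrict (G : Matrix (Fin 3) (Fin 3) Rt) (hG : G.IsSymm) (u w : Fin 3 → ℤ) :
    Sum.elim u w ⬝ᵥ (fromBlocks (G.map fun x => 2 * x.re) (G.map fun x => 4 * x.im)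
      (G.map fun x => 4 * x.im) (G.map fun x => 4 * x.re)) *ᵥ Sum.elim u w =
      2 * ((fun i => (⟨u i, w i⟩ : Rt)) ⬝ᵥ G *ᵥ (fun i => (⟨u i, w i⟩ : Rt))).re := by
  have h01 : G 1 0 = G 0 1 := hG.apply _ _
  have h02 : G 2 0 = G 0 2 := hG.apply _ _
  have h12 : G 2 1 = G 1 2 := hG.apply _ _
  simp [dotProduct, mulVec, Fin.sum_univ_three, h01, h02, h12]
  ring

/-- A ternary form over `ℤ[√2]`, totally positive and with Hessian determinant `2`, represents `1`
at two essentially different vectors: apply the bound of Hermite to its trace form. -/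
theorem two_min_vectors (Q : (Fin 3 → Rt) → Rt) (G : Matrix (Fin 3) (Fin 3) Rt) (hG : G.IsSymm)
    (hQ : ∀ x, x ⬝ᵥ G *ᵥ x = 2 * Q x) (hdet : G.det = 2) (hpos : ∀ x, x ≠ 0 → TP (Q x)) :
    ∃ x y, Q x = 1 ∧ Q y = 1 ∧ x ≠ y ∧ x ≠ -y := by
  let H := fromBlocks (G.map fun x => 2 * x.re) (G.map fun x => 4 * x.im)
      (G.map fun x => 4 * x.im) (G.map fun x => 4 * x.re)
  let e : Fin 6 ≃ Fin 3 ⊕ Fin 3 := (finSumFinEquiv (m := 3) (n := 3)).symm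
  let vec : (Fin 6 → ℤ) → (Fin 3 → Rt) := fun x i => ⟨x (e.symm (Sum.inl i)), x (e.symm (Sum.inr i))⟩
  have hH : ∀ x : Fin 6 → ℤ, x ⬝ᵥ H.submatrix e e *ᵥ x = 4 * (Q (vec x)).re := by
    intro x
    have h1 := quad_restrict G hG (fun i => x (e.symm (Sum.inl i))) (fun i => x (e.symm (Sum.inr i)))
    rw [hQ] at h1
    have h2 : Sum.elim (fun i => x (e.symm (Sum.inl i))) (fun i => x (e.symm (Sum.inr i))) =
        x ∘ e.symm := by
      ext (i | i) <;> rfl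
    rw [h2] at h1
    rw [submatrix_mulVec_equiv, ← comp_equiv_symm_dotProduct]
    have h3 : (2 * Q (vec x)).re = 2 * (Q (vec x)).re := by simp
    rw [show (4 : ℤ) * (Q (vec x)).re = 2 * (2 * (Q (vec x)).re) by ring, ← h3, ← h1]
  have hvec0 : ∀ x, x ≠ 0 → vec x ≠ 0 := by
    intro x hx h
    apply hx
    funext i
    obtain ⟨j, rfl⟩ := e.symm.surjective i
    rcases j with j | j
    · exact congrArg Zsqrtd.re (congrFun h j)
    · exact congrArg Zsqrtd.im (congrFun h j)
  have hsymm : (H.submatrix e e).IsSymm := by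
    apply IsSymm.submatrix
    exact IsSymm.fromBlocks (hG.map _) (hG.map _) (hG.map _)
  have hdetH : (H.submatrix e e).det = 2048 := by
    rw [det_submatrix_equiv_self]
    have h1 := det_restrict G
    rw [hdet] at h1
    have h2 : H = fromBlocks ((2 : ℤ) • (1 : Matrix (Fin 3) (Fin 3) ℤ)) 0 0 ((4 : ℤ) • 1) *
        fromBlocks (G.map Zsqrtd.re) (G.map fun x => 2 * x.im) (G.map Zsqrtd.im)
          (G.map Zsqrtd.re) := by
      rw [fromBlocks_multiply]
      simp only [H]
      simp only [Matrix.smul_mul, Matrix.one_mul, Matrix.zero_mul, add_zero, zero_add]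
      congr 1 <;> ext i j <;> simp only [Matrix.smul_apply, map_apply, smul_eq_mul] <;> ring
    rw [h2, det_mul, h1, det_fromBlocks_zero₂₁, det_smul, det_smul]
    simp [Zsqrtd.norm_def]
  have hval : ∀ x : Fin 6 → ℤ, x ⬝ᵥ H.submatrix e e *ᵥ x = 4 → x ≠ 0 → Q (vec x) = 1 := by
    intro x hx h0
    rw [hH] at hx
    have h1 : (Q (vec x)).re = 1 := by omega
    have h2 := (hpos _ (hvec0 x h0)).norm_pos
    rw [Zsqrtd.norm_def, h1] at h2
    have h3 : (Q (vec x)).im = 0 := by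
      by_contra hc
      have : 0 < (Q (vec x)).im ^ 2 := by positivity
      nlinarith
    ext <;> simp [h1, h3]
  obtain ⟨x, y, hx, hy, h1, h2⟩ := hermite_six (H.submatrix e e) hsymm
    (fun x hx => by
      rw [hH]
      have := (hpos _ (hvec0 x hx)).re_pos
      omega) hdetH (fun x => ⟨_, hH x⟩)
  have hx0 : x ≠ 0 := by rintro rfl; simp at hx
  have hy0 : y ≠ 0 := by rintro rfl; simp at hy
  refine ⟨vec x, vec y, hval x hx hx0, hval y hy hy0, ?_, ?_⟩
  · intro h
    apply hvec0 (x - y) (sub_ne_zero.2 h1)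
    have : vec (x - y) = vec x - vec y := by ext i <;> rfl
    rw [this, h, sub_self]
  · intro h
    apply hvec0 (x + y) (by rwa [Ne, add_eq_zero_iff_eq_neg])
    have : vec (x + y) = vec x + vec y := by ext i <;> rfl
    rw [this, h, neg_add_cancel]

/-- Up to a square, `n` is a sum of three squares in `ℤ[√2]`. -/
def SumThree (n : Rt) : Prop := ∃ d x y z : Rt, d ≠ 0 ∧ d ^ 2 * n = x ^ 2 + y ^ 2 + z ^ 2

/-- For two vectors of value `1` that differ by more than a sign, the polar form takes a value `s`
between `-2` and `2` in both embeddings. There are few such `s`, and for each of them `4 - s²` is a sum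
of two squares. -/
lemma small_trace {s : Rt} (h1 : TP (2 + s)) (h2 : TP (2 - s)) :
    ∃ m μ ν : Rt, m ≠ 0 ∧ 4 - s ^ 2 = m ∧ m = μ ^ 2 + ν ^ 2 := by
  have a1 := h1.re_pos
  have a2 := h2.re_pos
  have b1 := h1.norm_pos
  have b2 := h2.norm_pos
  obtain ⟨u, v⟩ := s
  rw [Zsqrtd.norm_def] at b1 b2
  simp at a1 a2 b1 b2
  have hu : u = -1 ∨ u = 0 ∨ u = 1 := by omega
  have hv : v = -1 ∨ v = 0 ∨ v = 1 := by
    have : v ^ 2 < 4 := by nlinarith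
    have h3 : v < 2 := by nlinarith
    have h4 : -2 < v := by nlinarith
    omega
  have three : (3 : Rt) ≠ 0 := by
    intro h; have := congrArg Zsqrtd.re h; simp at this
  have four : (4 : Rt) ≠ 0 := by
    intro h; have := congrArg Zsqrtd.re h; simp at this
  rcases hu with rfl | rfl | rfl <;> rcases hv with rfl | rfl | rfl <;>
    first
    | (exfalso; omega)
    | (refine ⟨3, 1, rt, three, ?_, ?_⟩ <;> ext <;> simp [sq] <;> done)
    | (refine ⟨2, 1, 1, two_ne_zero', ?_, ?_⟩ <;> ext <;> simp [sq] <;> done)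
    | (refine ⟨4, 2, 0, four, ?_, ?_⟩ <;> ext <;> simp [sq])

/-- The conditions on `b`, `a`, `c` make the ternary form with matrix `G` totally positive of Hessian
determinant `2`, while it takes the value `n` at the third unit vector. The Gram determinant of that
vector and two vectors of value `1` expresses `n (4 - s²)` by squares, which gives three squares
because `4 - s²` is a sum of two. -/
theorem core_three {n b a a₁ c : Rt} (hn : TP n) (hc : TP c) (h1 : c = 4 * n * b - 1)
    (h2 : c * a₁ = b + a ^ 2) : SumThree n := by
  let Q : (Fin 3 → Rt) → Rt := fun x =>
    a₁ * x 0 ^ 2 + 2 * a * x 0 * x 1 + c * x 1 ^ 2 + x 0 * x 2 + n * x 2 ^ 2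
  let G : Matrix (Fin 3) (Fin 3) Rt := !![2 * a₁, 2 * a, 1; 2 * a, 2 * c, 0; 1, 0, 2 * n]
  have hG : G.IsSymm := by
    apply IsSymm.ext; intro i j; fin_cases i <;> fin_cases j <;> rfl
  have hQ : ∀ x, x ⬝ᵥ G *ᵥ x = 2 * Q x := by
    intro x
    simp [G, Q, dotProduct, mulVec, Fin.sum_univ_three]; ring
  have hdet : G.det = 2 := by
    rw [det_fin_three]
    simp [G]
    linear_combination 8 * n * h2 - 2 * h1
  have h4 : TP (4 : Rt) := by
    have := TP_intCast (a := 4) (by norm_num)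
    exact_mod_cast this
  have hpos : ∀ x, x ≠ 0 → TP (Q x) := by
    intro x hx
    refine TP.of_mul (x := 4 * n * c) ((h4.mul hn).mul hc) ?_
    have e : 4 * n * c * Q x = 4 * n * (c * x 1 + a * x 0) ^ 2 + x 0 ^ 2 +
        c * (x 0 + 2 * n * x 2) ^ 2 := by
      simp only [Q]
      linear_combination (4 * n * x 0 ^ 2) * h2 - (x 0 ^ 2) * h1
    rw [e]
    have f1 := (h4.mul hn).1
    have f2 := (h4.mul hn).2
    refine TP_of_nonneg ?_ ?_ ?_
    · intro h0
      have h := congrArg sA h0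
      rw [map_add, map_add, map_mul sA (4 * n), map_mul sA c, map_pow, map_pow, map_pow,
        map_zero] at h
      have g1 := mul_nonneg f1.le (sq_nonneg (sA (c * x 1 + a * x 0)))
      have g2 := sq_nonneg (sA (x 0))
      have g3 := mul_nonneg hc.1.le (sq_nonneg (sA (x 0 + 2 * n * x 2)))
      have k1 : x 0 = 0 := by
        by_contra hne
        exact sA_ne_zero hne (pow_eq_zero_iff (two_ne_zero)|>.1 (by linarith))
      have k3 : x 2 = 0 := by
        by_contra hne
        have : x 0 + 2 * n * x 2 ≠ 0 := by
          rw [k1, zero_add]; exact mul_ne_zero (mul_ne_zero two_ne_zero' hn.ne_zero) hne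
        have g := mul_pos hc.1 (pow_pos (abs_pos.2 (sA_ne_zero this)) 2)
        rw [sq_abs] at g
        linarith
      have k2 : x 1 = 0 := by
        by_contra hne
        have : c * x 1 + a * x 0 ≠ 0 := by
          rw [k1, mul_zero, add_zero]; exact mul_ne_zero hc.ne_zero hne
        have g := mul_pos f1 (pow_pos (abs_pos.2 (sA_ne_zero this)) 2)
        rw [sq_abs] at g
        linarith
      apply hx
      funext i; fin_cases i
      · exact k1
      · exact k2
      · exact k3
    · rw [map_add, map_add, map_mul sA (4 * n), map_mul sA c, map_pow, map_pow, map_pow]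
      have := hc.1
      positivity
    · rw [map_add, map_add, map_mul sB (4 * n), map_mul sB c, map_pow, map_pow, map_pow]
      have := hc.2
      positivity
  obtain ⟨x, y, hx, hy, hxy, hxy'⟩ := two_min_vectors Q G hG hQ hdet hpos
  set s := 2 * a₁ * x 0 * y 0 + 2 * a * (x 0 * y 1 + x 1 * y 0) + 2 * c * x 1 * y 1 +
    x 0 * y 2 + x 2 * y 0 + 2 * n * x 2 * y 2 with hs
  have t1 : Q (x + y) = 2 + s := by
    have : Q (x + y) = Q x + Q y + s := by simp only [Q, s, Pi.add_apply]; ring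
    rw [this, hx, hy]; ring
  have t2 : Q (x - y) = 2 - s := by
    have : Q (x - y) = Q x + Q y - s := by simp only [Q, s, Pi.sub_apply]; ring
    rw [this, hx, hy]; ring
  obtain ⟨m, μ, ν, hm0, hm, hμ⟩ := small_trace (s := s)
    (t1 ▸ hpos _ (by rwa [Ne, add_eq_zero_iff_eq_neg])) (t2 ▸ hpos _ (sub_ne_zero.2 hxy))
  set p := x 0 + 2 * n * x 2 with hp
  set r := y 0 + 2 * n * y 2 with hr
  set Δ := x 0 * y 1 - x 1 * y 0 with hΔ
  -- the Gram determinant of the two vectors and the third unit vector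
  have gram : n * (4 - s ^ 2) = Δ ^ 2 + r ^ 2 + p ^ 2 - s * p * r := by
    have id : 2 * (n * (4 * Q x * Q y - s ^ 2) - Q x * r ^ 2 - Q y * p ^ 2 + s * p * r) =
        Δ ^ 2 * (8 * n * (a₁ * c - a ^ 2) - 2 * c) := by
      simp only [Q, s, p, r, Δ]; ring
    rw [hx, hy] at id
    apply mul_left_cancel₀ two_ne_zero'
    linear_combination id + Δ ^ 2 * (8 * n * h2 - 2 * h1)
  refine ⟨2 * m, m * r, 2 * μ * Δ + ν * (2 * p - s * r), μ * (2 * p - s * r) - 2 * ν * Δ,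
    mul_ne_zero two_ne_zero' hm0, ?_⟩
  have gram' : n * m = Δ ^ 2 + r ^ 2 + p ^ 2 - s * p * r := by rw [← hm]; exact gram
  clear_value s p r Δ
  linear_combination 4 * m * gram' + m * r ^ 2 * hm + (4 * Δ ^ 2 + (2 * p - s * r) ^ 2) * hμ

end FiveSq

/-! ### Squares modulo primes -/

namespace FiveSq
open NumberTheorySymbols

section
variable {F : Type*} [Field F] [Fintype F] [DecidableEq F]

lemma isSquare_mul_of_not {a b : F} (ha : ¬ IsSquare a) (hb : ¬ IsSquare b) : IsSquare (a * b) := by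
  have h0 : a * b ≠ 0 := by
    intro h
    rcases mul_eq_zero.1 h with rfl | rfl
    · exact ha IsSquare.zero
    · exact hb IsSquare.zero
  rw [← quadraticChar_one_iff_isSquare h0, map_mul,
    quadraticChar_neg_one_iff_not_isSquare.2 ha, quadraticChar_neg_one_iff_not_isSquare.2 hb]
  norm_num

/-- Square roots in the quadratic extension `F(√2)` of elements of square norm. -/
lemma sqrt_inert (h2 : ¬ IsSquare (2 : F)) {u v w : F} (h : u ^ 2 - 2 * v ^ 2 = w ^ 2) :
    ∃ x y : F, x ^ 2 + 2 * y ^ 2 = u ∧ 2 * x * y = v := by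
  have h20 : (2 : F) ≠ 0 := by
    intro h; rw [h] at h2; exact h2 IsSquare.zero
  by_cases hv : v = 0
  · subst hv
    by_cases hu : IsSquare u
    · obtain ⟨x, rfl⟩ := hu
      exact ⟨x, 0, by ring, by ring⟩
    · obtain ⟨y, hy⟩ := isSquare_mul_of_not h2 hu
      refine ⟨0, y / 2, ?_, by ring⟩
      field_simp
      linear_combination -hy
  · -- one of `(u ± w) / 2` is a square
    obtain ⟨w', hw', x, hx⟩ : ∃ w', w' ^ 2 = w ^ 2 ∧ IsSquare ((u + w') / 2) := by
      by_contra! hc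
      have h1 := hc w rfl
      have h3 := hc (-w) (by ring)
      obtain ⟨z, hz⟩ := isSquare_mul_of_not h1 h3
      apply h2
      refine ⟨2 * z / v, ?_⟩
      field_simp
      field_simp at hz
      have : 2 * (2 * v ^ 2 - (2 * z) ^ 2) = 0 := by linear_combination 2 * hz - 2 * h
      have := (mul_eq_zero.1 this).resolve_left h20
      apply mul_left_cancel₀ h20
      linear_combination this
    have hx0 : x ≠ 0 := by
      rintro rfl
      rw [mul_zero, div_eq_zero_iff, or_iff_left h20] at hx
      apply hv
      have : 2 * v ^ 2 = 0 := by linear_combination (u - w') * hx - h + hw'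
      exact pow_eq_zero_iff two_ne_zero |>.1 ((mul_eq_zero.1 this).resolve_left h20)
    refine ⟨x, v / (2 * x), ?_, by field_simp⟩
    rw [div_eq_iff h20] at hx
    field_simp
    apply mul_left_cancel₀ h20
    linear_combination (-2 * x ^ 2 + u - w') * hx + hw' - h

end

/-- The primes `p ≡ 3, 5 (mod 8)` are inert in `ℤ[√2]`, and `-b` is a square modulo `p` as soon as
its norm is one. -/
lemma sqrt_mod_inert {p : ℕ} [Fact p.Prime] (hp : p % 8 = 3 ∨ p % 8 = 5) {b : Rt}
    (h : IsSquare ((b.norm : ℤ) : ZMod p)) : ∃ a : Rt, (p : Rt) ∣ b + a ^ 2 := by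
  have h2 : ¬ IsSquare (2 : ZMod p) := by
    rw [ZMod.exists_sq_eq_two_iff (by rintro rfl; omega)]
    omega
  obtain ⟨w, hw⟩ := h
  obtain ⟨x, y, hx, hy⟩ := sqrt_inert h2 (u := -(b.re : ZMod p)) (v := -(b.im : ZMod p)) (w := w)
    (by rw [Zsqrtd.norm_def] at hw; push_cast at hw; linear_combination hw)
  obtain ⟨x, rfl⟩ := ZMod.intCast_surjective x
  obtain ⟨y, rfl⟩ := ZMod.intCast_surjective y
  refine ⟨⟨x, y⟩, ?_⟩
  have := Zsqrtd.intCast_dvd (d := 2) p (b + ⟨x, y⟩ ^ 2)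
  push_cast at this
  rw [this]
  simp only [sq]
  constructor
  · rw [← ZMod.intCast_zmod_eq_zero_iff_dvd]
    simp
    linear_combination hx
  · rw [← ZMod.intCast_zmod_eq_zero_iff_dvd]
    simp
    linear_combination hy

/-- For a prime `p ≡ 7 (mod 16)` and `s = √2` in `𝔽_p`, the element `2 + s` is not a square: if
`θ ^ 2 = 2 + s`, write `θ = ζ + ζ⁻¹` with `ζ` of order `16` in the algebraic closure; Frobenius
fixes `θ`, so `16 ∣ p ± 1`. -/
lemma not_isSquare_two_add_aux {p : ℕ} [Fact p.Prime] (hp : p % 16 = 7) {s : ZMod p}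
    (hs : s ^ 2 = 2) {K : Type*} [Field K] [Algebra (ZMod p) K] [CharP K p] [IsAlgClosed K] :
    ¬ IsSquare (2 + s) := by
  rintro ⟨θ, hθ⟩
  have h20 : (2 : K) ≠ 0 := by
    intro h
    have h' : ((2 : ℕ) : K) = 0 := by exact_mod_cast h
    rw [CharP.cast_eq_zero_iff K p] at h'
    have := Nat.le_of_dvd (by norm_num) h'
    omega
  obtain ⟨t, ht⟩ : ∃ t : K, t = algebraMap (ZMod p) K θ := ⟨_, rfl⟩
  obtain ⟨δ, hδ⟩ := IsAlgClosed.exists_pow_nat_eq (t ^ 2 - 4) (n := 2) (by norm_num)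
  obtain ⟨z, hz⟩ : ∃ z, z = (t + δ) / 2 := ⟨_, rfl⟩
  have hz2 : z ^ 2 - t * z + 1 = 0 := by
    rw [hz]; field_simp; linear_combination hδ
  have hz0 : z ≠ 0 := by
    intro h; rw [h] at hz2; simp at hz2
  have htp : t ^ p = t := by
    rw [ht, ← map_pow, ZMod.pow_card]
  have ht4 : t ^ 4 - 4 * t ^ 2 + 2 = 0 := by
    have : θ ^ 4 - 4 * θ ^ 2 + 2 = 0 := by
      have e : θ ^ 2 = 2 + s := by rw [hθ]; ring
      linear_combination (θ ^ 2 + 2 + s - 4) * e + hs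
    have := congrArg (algebraMap (ZMod p) K) this
    simpa only [ht, map_add, map_sub, map_mul, map_pow, map_ofNat, map_zero] using this
  have hz8 : z ^ 8 = -1 := by
    have e : z ^ 2 + 1 = t * z := by linear_combination hz2
    have e2 : z ^ 4 + 1 = (t ^ 2 - 2) * z ^ 2 := by
      linear_combination (z ^ 2 + 1 + t * z) * e
    linear_combination (z ^ 4 + 1 + (t ^ 2 - 2) * z ^ 2) * e2 + z ^ 4 * ht4
  have hfrob : (z ^ p) ^ 2 - t * z ^ p + 1 = 0 := by
    have := congrArg (frobenius K p) hz2
    rw [map_add, map_sub, map_mul, map_pow, map_one, map_zero] at this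
    simp only [frobenius_def, htp] at this
    exact this
  have hzp : z ^ p = z ^ 7 := by
    have h16 : z ^ 16 = 1 := by linear_combination (z ^ 8 - 1) * hz8
    calc z ^ p = z ^ (16 * (p / 16) + 7) := by congr 1; omega
      _ = z ^ 7 := by rw [pow_add, pow_mul, h16, one_pow, one_mul]
  have hprod : (z ^ p - z) * (z * z ^ p - 1) = 0 := by
    linear_combination z * hfrob - z ^ p * hz2
  have hne : (1 : K) ≠ -1 := by
    intro h; apply h20; linear_combination h
  rw [hzp] at hprod
  rcases mul_eq_zero.1 hprod with h | h
  · have h6 : z ^ 6 = 1 := by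
      apply mul_left_cancel₀ hz0
      linear_combination h
    apply hne
    calc (1 : K) = (z ^ 6) ^ 4 := by rw [h6]; ring
      _ = (z ^ 8) ^ 3 := by ring
      _ = -1 := by rw [hz8]; ring
  · apply hne
    calc (1 : K) = z ^ 8 := by linear_combination -h
      _ = -1 := hz8

lemma not_isSquare_two_add {p : ℕ} [Fact p.Prime] (hp : p % 16 = 7) {s : ZMod p}
    (hs : s ^ 2 = 2) : ¬ IsSquare (2 + s) :=
  not_isSquare_two_add_aux hp hs (K := AlgebraicClosure (ZMod p))

/-- Quadratic reciprocity for `p ≡ 3 (mod 4)` and `p ≡ -1 (mod N)`. -/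
lemma jac_recip {p N : ℕ} (hp : p % 4 = 3) (hN : Odd N) (h : N ∣ p + 1) : J(N | p) = 1 := by
  have hp' : Odd p := Nat.odd_iff.2 (by omega)
  have h1 : J(p | N) = J(-1 | N) := by
    apply jacobiSym.mod_left'
    apply Int.ModEq.symm
    rw [Int.modEq_iff_dvd]
    have : (N : ℤ) ∣ ((p + 1 : ℕ) : ℤ) := Int.natCast_dvd_natCast.2 h
    simpa using this
  rw [jacobiSym.at_neg_one hN] at h1
  have hN2 := Nat.odd_iff.1 hN
  rcases (by omega : N % 4 = 1 ∨ N % 4 = 3) with h4 | h4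
  · rw [jacobiSym.quadratic_reciprocity_one_mod_four h4 hp', h1, ZMod.χ₄_nat_one_mod_four h4]
  · rw [jacobiSym.quadratic_reciprocity_three_mod_four h4 hp, h1, ZMod.χ₄_nat_three_mod_four h4]
    norm_num

/-- Dirichlet's theorem combined with the Chinese remainder theorem. -/
lemma exists_prime_crt {N i r : ℕ} (hN : Odd N) (hi : Odd i) (hr : r.Coprime N) (B : ℕ) :
    ∃ p, B < p ∧ p.Prime ∧ p ≡ i [MOD 8] ∧ p ≡ r [MOD N] := by
  have hc : Nat.Coprime 8 N := by
    have : Nat.Coprime 2 N := (Nat.coprime_two_left).2 hN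
    exact Nat.Coprime.pow_left 3 this
  obtain ⟨k, hk1, hk2⟩ := Nat.chineseRemainder hc i r
  have hN0 : N ≠ 0 := by rintro rfl; simp at hN
  obtain ⟨p, hpB, hp, hpm⟩ := Nat.forall_exists_prime_gt_and_modEq B (q := 8 * N) (a := k)
    (by positivity) (by
      apply Nat.Coprime.mul_right
      · have : Nat.Coprime i 8 := Nat.Coprime.pow_right 3 (Nat.coprime_two_right.2 hi)
        rw [Nat.Coprime, hk1.gcd_eq]; exact this
      · rw [Nat.Coprime, hk2.gcd_eq]; exact hr)
  exact ⟨p, hpB, hp, (hpm.of_mul_right N).trans hk1, (hpm.of_mul_left 8).trans hk2⟩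

lemma exists_jac_neg_one (N : ℕ) (hN : Odd N) (hsq : ¬ IsSquare N) : ∃ r : ℕ, J(r | N) = -1 := by
  induction N using Nat.strong_induction_on with
  | _ N ih =>
  have hN0 : N ≠ 0 := by rintro rfl; simp at hN
  obtain ⟨l, hl, m, rfl⟩ := Nat.exists_prime_and_dvd (n := N) (by
    rintro rfl; exact hsq ⟨1, rfl⟩)
  have hlodd : Odd l := Nat.Odd.of_mul_left hN
  have hmodd : Odd m := Nat.Odd.of_mul_right hN
  have hl0 : NeZero l := ⟨hl.ne_zero⟩
  have hm0 : NeZero m := ⟨by rintro rfl; simp at hN0⟩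
  have : Fact l.Prime := ⟨hl⟩
  by_cases hlm : l ∣ m
  · obtain ⟨k, rfl⟩ := hlm
    have hk0 : NeZero k := ⟨by rintro rfl; simp at hN0⟩
    have hkodd : Odd k := Nat.Odd.of_mul_right hmodd
    obtain ⟨r, hr⟩ := ih k (by
      have := hl.two_le
      have := Nat.pos_of_ne_zero hk0.out
      have h1 : 2 * k ≤ l * k := by gcongr
      have h2 : 1 * (l * k) ≤ l * (l * k) := by gcongr; omega
      omega) hkodd (by
      rintro ⟨j, rfl⟩; exact hsq ⟨l * j, by ring⟩)
    have hrc : r.Coprime k := by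
      have : J(r | k) ≠ 0 := by rw [hr]; norm_num
      rw [Ne, jacobiSym.eq_zero_iff_not_coprime] at this
      simpa using this
    obtain ⟨p, hpB, hp, -, hpk⟩ := exists_prime_crt hkodd odd_one hrc l
    refine ⟨p, ?_⟩
    rw [← mul_assoc, jacobiSym.mul_right _ (l * l) k, jacobiSym.mul_right, ← sq]
    have h1 : (p : ℤ).gcd l = 1 := by
      rw [Int.gcd_natCast_natCast]
      exact (Nat.coprime_primes hp hl).2 (by omega)
    rw [jacobiSym.sq_one h1, one_mul, ← hr]
    apply jacobiSym.mod_left'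
    exact (Int.natCast_modEq_iff.2 hpk)
  · have hc : Nat.Coprime l m := (Nat.Prime.coprime_iff_not_dvd hl).2 hlm
    obtain ⟨x, hx⟩ := FiniteField.exists_nonsquare (F := ZMod l) (by
      rw [ZMod.ringChar_zmod_n]; rintro rfl; exact absurd hlodd (by decide))
    obtain ⟨r, hr1, hr2⟩ := Nat.chineseRemainder hc x.val 1
    refine ⟨r, ?_⟩
    rw [jacobiSym.mul_right]
    have h1 : J(r | l) = -1 := by
      rw [ZMod.nonsquare_iff_jacobiSym_eq_neg_one]
      have : ((r : ℤ) : ZMod l) = x := by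
        rw [Int.cast_natCast, (ZMod.natCast_eq_natCast_iff _ _ _).2 hr1]
        simp
      rwa [this]
    have h2 : J(r | m) = J(1 | m) := by
      apply jacobiSym.mod_left'
      exact_mod_cast (Int.natCast_modEq_iff.2 hr2)
    rw [h1, h2, jacobiSym.one_left]; norm_num

end FiveSq

/-! ### Totally positive elements are sums of three squares up to squares -/

namespace FiveSq
open NumberTheorySymbols

lemma SumThree.sq_mul {n : Rt} (h : SumThree n) (m : Rt) : SumThree (m ^ 2 * n) := by
  obtain ⟨d, x, y, z, hd, h⟩ := h
  exact ⟨d, m * x, m * y, m * z, hd, by linear_combination m ^ 2 * h⟩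

/-- The criterion `core_three` for `b = n̄ t`, for which `c = 4 n b - 1` is a rational integer. -/
lemma three_of_dvd {n : Rt} (hn : TP n) {t c : ℤ} (hc : 0 < c) (h : c = 4 * n.norm * t - 1) {a : Rt}
    (hd : (c : Rt) ∣ star n * t + a ^ 2) : SumThree n := by
  obtain ⟨a₁, ha₁⟩ := hd
  refine core_three (b := star n * t) (a := a) (a₁ := a₁) (c := c) hn (TP_intCast hc) ?_ ha₁.symm
  rw [h]
  push_cast
  rw [Zsqrtd.norm_eq_mul_conj]
  ring

lemma exists_norm_nat {n : Rt} (hn : TP n) : ∃ N : ℕ, n.norm = N ∧ 0 < N := by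
  have := hn.norm_pos
  exact ⟨n.norm.toNat, by omega, by omega⟩

lemma exists_prime_neg_one {M : ℕ} (hM : 0 < M) (h2 : 2 ∣ M) :
    ∃ p t : ℕ, p.Prime ∧ p + 1 = M * t ∧ Odd t := by
  obtain ⟨p, hpB, hp, hpm⟩ := Nat.forall_exists_prime_gt_and_modEq (2 * M) (q := M * 2) (a := M - 1)
    (by positivity) (by
      have h1 : Nat.Coprime (M - 1) M := by
        have := Nat.coprime_self_add_right (m := M - 1) (n := 1)
        rw [show M - 1 + 1 = M by omega] at this
        exact this.2 (by simp)
      exact Nat.Coprime.mul_right h1 (Nat.Coprime.coprime_dvd_right h2 h1))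
  obtain ⟨k, hk⟩ := (Nat.modEq_iff_dvd' (by omega)).1 hpm.symm
  refine ⟨p, 1 + 2 * k, hp, ?_, ⟨k, by ring⟩⟩
  have : M * (1 + 2 * k) = M + M * 2 * k := by ring
  omega

lemma norm_star_mul (n : Rt) (t : ℤ) : (star n * (t : Rt)).norm = n.norm * t ^ 2 := by
  rw [Zsqrtd.norm_mul, Zsqrtd.norm_conj, Zsqrtd.norm_intCast]; ring

lemma isSquare_norm {p : ℕ} [Fact p.Prime] {n : Rt} {N : ℕ} (hN : n.norm = N) (hJ : J(N | p) = 1)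
    (t : ℤ) : IsSquare (((star n * (t : Rt)).norm : ℤ) : ZMod p) := by
  obtain ⟨w, hw⟩ := ZMod.isSquare_of_jacobiSym_eq_one hJ
  rw [norm_star_mul, hN]
  refine ⟨w * t, ?_⟩
  push_cast at hw ⊢
  rw [hw]; ring

/-- For odd norm `N`, take for `c` a prime `p ≡ 3 (mod 8)` with `p = 4 N t - 1`; reciprocity makes `N`
a square modulo `p`. -/
lemma three_of_odd {n : Rt} (hn : TP n) (ho : Odd n.norm) : SumThree n := by
  obtain ⟨N, hN, hN0⟩ := exists_norm_nat hn
  have hNo : Odd N := by rw [hN] at ho; exact_mod_cast ho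
  obtain ⟨p, t, hp, hpt, ht⟩ := exists_prime_neg_one (M := 4 * N) (by omega) ⟨2 * N, by ring⟩
  have : Fact p.Prime := ⟨hp⟩
  have hp8 : p % 8 = 3 := by
    obtain ⟨k, hk⟩ := hNo.mul ht
    have : p + 1 = 4 * (2 * k + 1) := by rw [hpt, ← hk]; ring
    omega
  have hJ : J(N | p) = 1 := jac_recip (by omega) hNo ⟨4 * t, by rw [hpt]; ring⟩
  obtain ⟨a, ha⟩ := sqrt_mod_inert (Or.inl hp8) (isSquare_norm hN hJ t)
  refine three_of_dvd hn (c := p) (t := t) (a := a) (by exact_mod_cast hp.pos) ?_ (by exact_mod_cast ha)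
  rw [hN]
  have : (p : ℤ) + 1 = 4 * N * t := by exact_mod_cast hpt
  omega

/-- For norm `2 N` with `N` odd and not a square, take `c = p q` with primes `p ≡ 3` and `q ≡ 5`
modulo `8`, both inert, such that `2 N` is a square modulo each of them. Prescribing the residue
symbols of `p` and `q` modulo `N` requires that `N` is not a square. -/
lemma three_of_nonsquare {n : Rt} (hn : TP n) {N : ℕ} (hN : n.norm = (2 * N : ℕ)) (hNo : Odd N)
    (hsq : ¬ IsSquare N) : SumThree n := by
  have hN2 := Nat.odd_iff.1 hNo
  have hNZ : NeZero N := ⟨by omega⟩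
  obtain ⟨r, hr⟩ : ∃ r : ℕ, J(r | N) = - ZMod.χ₄ N := by
    rcases (by omega : N % 4 = 1 ∨ N % 4 = 3) with h4 | h4
    · rw [ZMod.χ₄_nat_one_mod_four h4]; exact exists_jac_neg_one N hNo hsq
    · rw [ZMod.χ₄_nat_three_mod_four h4]; exact ⟨1, by simp⟩
  have hχ : (ZMod.χ₄ N) * (ZMod.χ₄ N) = 1 := by
    rcases (by omega : N % 4 = 1 ∨ N % 4 = 3) with h4 | h4
    · rw [ZMod.χ₄_nat_one_mod_four h4]; norm_num
    · rw [ZMod.χ₄_nat_three_mod_four h4]; norm_num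
  have hrc : r.Coprime N := by
    have : J(r | N) ≠ 0 := by
      rw [hr]; intro h; rw [neg_eq_zero] at h; rw [h] at hχ; norm_num at hχ
    rw [Ne, jacobiSym.eq_zero_iff_not_coprime] at this
    simpa using this
  obtain ⟨p, -, hp, hp8, hpN⟩ := exists_prime_crt (i := 3) hNo (by decide) hrc 1
  have hpc : p.Coprime N := by rw [Nat.Coprime, hpN.gcd_eq]; exact hrc
  obtain ⟨r', hr'⟩ : ∃ r' : ℕ, N ∣ p * r' + 1 := by
    refine ⟨(-(p : ZMod N)⁻¹).val, ?_⟩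
    rw [← ZMod.natCast_eq_zero_iff]
    push_cast
    rw [ZMod.natCast_zmod_val, mul_neg, ZMod.coe_mul_inv_eq_one p hpc]
    ring
  have hrc' : r'.Coprime N := by
    have h1 : r'.gcd N ∣ p * r' := (Nat.gcd_dvd_left r' N).mul_left p
    exact Nat.dvd_one.1 ((Nat.dvd_add_right h1).1 ((Nat.gcd_dvd_right r' N).trans hr'))
  obtain ⟨q, -, hq, hq8, hqN⟩ := exists_prime_crt (i := 5) hNo (by decide) hrc' 1
  have : Fact p.Prime := ⟨hp⟩
  have : Fact q.Prime := ⟨hq⟩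
  have hp8' : p % 8 = 3 := hp8
  have hq8' : q % 8 = 5 := hq8
  have hpo : Odd p := Nat.odd_iff.2 (by omega)
  have hqo : Odd q := Nat.odd_iff.2 (by omega)
  have hpqN : N ∣ p * q + 1 := by
    have : p * q + 1 ≡ p * r' + 1 [MOD N] := (hqN.mul_left p).add_right 1
    exact (this.dvd_iff dvd_rfl).2 hr'
  have hpq8 : 8 ∣ p * q + 1 := by
    rw [Nat.dvd_iff_mod_eq_zero, Nat.add_mod, Nat.mul_mod, hp8', hq8']
  have h8N : Nat.Coprime 8 N := Nat.Coprime.pow_left 3 ((Nat.coprime_two_left).2 hNo)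
  obtain ⟨t, ht⟩ := h8N.mul_dvd_of_dvd_of_dvd hpq8 hpqN
  have hJpN : J(p | N) = - ZMod.χ₄ N := by
    rw [← hr]; exact jacobiSym.mod_left' (Int.natCast_modEq_iff.2 hpN)
  have hJqN : J(q | N) = -1 := by
    have h1 : J(((p * q : ℕ) : ℤ) | N) = J(-1 | N) := by
      apply jacobiSym.mod_left'
      apply Int.ModEq.symm
      rw [Int.modEq_iff_dvd]
      have : (N : ℤ) ∣ ((p * q + 1 : ℕ) : ℤ) := Int.natCast_dvd_natCast.2 hpqN
      simpa using this
    rw [Nat.cast_mul, jacobiSym.mul_left, hJpN, jacobiSym.at_neg_one hNo] at h1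
    linear_combination -(ZMod.χ₄ N) * h1 - (J(q | N) + 1) * hχ
  have hJ2p : J(2 | p) = -1 := by
    rw [jacobiSym.at_two hpo, ZMod.χ₈_nat_eq_if_mod_eight]; simp [hp8']; omega
  have hJ2q : J(2 | q) = -1 := by
    rw [jacobiSym.at_two hqo, ZMod.χ₈_nat_eq_if_mod_eight]; simp [hq8']; omega
  have hJp : J(((2 * N : ℕ) : ℤ) | p) = 1 := by
    rw [Nat.cast_mul, jacobiSym.mul_left, Nat.cast_ofNat, hJ2p]
    rcases (by omega : N % 4 = 1 ∨ N % 4 = 3) with h4 | h4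
    · rw [jacobiSym.quadratic_reciprocity_one_mod_four h4 hpo, hJpN, ZMod.χ₄_nat_one_mod_four h4]
      norm_num
    · rw [jacobiSym.quadratic_reciprocity_three_mod_four h4 (by omega), hJpN,
        ZMod.χ₄_nat_three_mod_four h4]
      norm_num
  have hJq : J(((2 * N : ℕ) : ℤ) | q) = 1 := by
    rw [Nat.cast_mul, jacobiSym.mul_left, Nat.cast_ofNat, hJ2q,
      ← jacobiSym.quadratic_reciprocity_one_mod_four (by omega) hNo, hJqN]
    norm_num
  obtain ⟨a, ha⟩ := sqrt_mod_inert (Or.inl hp8') (isSquare_norm hN hJp t)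
  obtain ⟨a', ha'⟩ := sqrt_mod_inert (Or.inr hq8') (isSquare_norm hN hJq t)
  have hcop : IsCoprime (p : ℤ) (q : ℤ) :=
    Nat.isCoprime_iff_coprime.2 ((Nat.coprime_primes hp hq).2 (by rintro rfl; omega))
  obtain ⟨u, v, huv⟩ := hcop
  have huv' : (u : Rt) * p + v * q = 1 := by exact_mod_cast congrArg (Int.cast : ℤ → Rt) huv
  have hcR : IsCoprime (p : Rt) (q : Rt) := ⟨u, v, huv'⟩
  refine three_of_dvd hn (c := p * q) (t := t) (a := a * (v * q) + a' * (u * p))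
    (by have := hp.pos; have := hq.pos; positivity) ?_ ?_
  · rw [hN]
    have : (p : ℤ) * q + 1 = 8 * N * t := by exact_mod_cast ht
    push_cast
    linear_combination this
  · push_cast
    apply hcR.mul_dvd
    · obtain ⟨k, hk⟩ := ha
      push_cast at hk
      refine ⟨k + u * (a' - a) * (2 * a + u * p * (a' - a)), ?_⟩
      have e : (v : Rt) * q = 1 - u * p := by linear_combination huv'
      rw [e]
      linear_combination hk
    · obtain ⟨k, hk⟩ := ha'
      push_cast at hk
      refine ⟨k + v * (a - a') * (2 * a' + v * q * (a - a')), ?_⟩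
      have e : (u : Rt) * p = 1 - v * q := by linear_combination huv'
      rw [e]
      linear_combination hk

lemma TP_two_add : TP ((2 : Rt) + rt) := TP_of (by decide) (by decide)

/-- The elements `(2 + √2) r` with `r` an odd positive integer: here a prime `p ≡ 7 (mod 16)`, split
in `ℤ[√2]`, does the job. -/
lemma three_of_special {r : ℕ} (hr : Odd r) : SumThree ((2 + rt) * r) := by
  have hr2 := Nat.odd_iff.1 hr
  obtain ⟨p, t, hp, hpt, ht⟩ := exists_prime_neg_one (M := 8 * r) (by omega) ⟨4 * r, by ring⟩
  have : Fact p.Prime := ⟨hp⟩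
  have hp16 : p % 16 = 7 := by
    obtain ⟨k, hk⟩ := hr.mul ht
    have : p + 1 = 8 * (2 * k + 1) := by rw [hpt, ← hk]; ring
    omega
  have hpo : Odd p := Nat.odd_iff.2 (by omega)
  have hp2 : p ≠ 2 := by omega
  obtain ⟨s, hs⟩ := (ZMod.exists_sq_eq_two_iff hp2).2 (by omega)
  have hs2 : s ^ 2 = 2 := by rw [hs]; ring
  have h2s := not_isSquare_two_add hp16 hs2
  have hneg : ¬ IsSquare (-1 : ZMod p) := by
    rw [ZMod.exists_sq_eq_neg_one_iff]; omega
  obtain ⟨f, hf⟩ := isSquare_mul_of_not hneg h2s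
  have h20 : (2 : ZMod p) ≠ 0 := by
    intro h
    have h' : ((2 : ℕ) : ZMod p) = 0 := by exact_mod_cast h
    rw [ZMod.natCast_eq_zero_iff] at h'
    have := Nat.le_of_dvd (by norm_num) h'
    omega
  have hs0 : s ≠ 0 := by rintro rfl; apply h20; rw [← hs2]; ring
  have hrt : (8 : ZMod p) * r * t = 1 := by
    have := congrArg (Nat.cast : ℕ → ZMod p) hpt
    push_cast at this
    rw [ZMod.natCast_self] at this
    linear_combination -this
  have hr0 : (r : ZMod p) ≠ 0 := by intro h; rw [h] at hrt; simp at hrt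
  have hf0 : f ≠ 0 := by
    rintro rfl
    apply h2s
    exact ⟨0, by linear_combination -hf⟩
  obtain ⟨g, hg⟩ := ZMod.isSquare_of_jacobiSym_eq_one (a := r)
    (jac_recip (p := p) (by omega) hr ⟨8 * t, by rw [hpt]; ring⟩)
  push_cast at hg
  have hg0 : g ≠ 0 := by rintro rfl; apply hr0; rw [hg]; ring
  -- `h ^ 2 = t`, `B ^ 2 = - t (2 + s)` and `A ^ 2 = - t (2 - s)`
  obtain ⟨h, hh⟩ : ∃ h : ZMod p, h ^ 2 = t := by
    refine ⟨1 / (2 * s * g), ?_⟩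
    field_simp
    linear_combination -hrt - 4 * t * g ^ 2 * hs2 + 8 * t * hg
  obtain ⟨B, hB⟩ : ∃ B : ZMod p, B ^ 2 = -t * (2 + s) := ⟨h * f, by
    linear_combination f ^ 2 * hh - t * hf⟩
  obtain ⟨A, hA⟩ : ∃ A : ZMod p, A ^ 2 = -t * (2 - s) := ⟨h * (s / f), by
    field_simp
    linear_combination s ^ 2 * hh - t * (2 - s) * hf + t * 2 * hs2⟩
  obtain ⟨x, hx⟩ := ZMod.intCast_surjective ((A + B) / 2)
  obtain ⟨y, hy⟩ := ZMod.intCast_surjective ((A - B) / (2 * s))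
  have hx' : 2 * (x : ZMod p) = A + B := by rw [hx]; field_simp
  have hy' : 2 * s * (y : ZMod p) = A - B := by rw [hy]; field_simp
  have hd : (p : Rt) ∣ (2 - rt) * t + ⟨x, y⟩ ^ 2 := by
    have := Zsqrtd.intCast_dvd (d := 2) p ((2 - rt) * t + ⟨x, y⟩ ^ 2)
    push_cast at this
    rw [this]
    simp only [sq]
    constructor
    · rw [← ZMod.intCast_zmod_eq_zero_iff_dvd]
      simp
      apply mul_left_cancel₀ h20
      apply mul_left_cancel₀ h20
      linear_combination (A + B + 2 * x) * hx' + (2 * s * y + (A - B)) * hy' - 4 * y ^ 2 * hs2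
        + 2 * hA + 2 * hB
    · rw [← ZMod.intCast_zmod_eq_zero_iff_dvd]
      simp
      apply mul_left_cancel₀ h20
      apply mul_left_cancel₀ hs0
      linear_combination 2 * s * y * hx' + (A + B) * hy' + hA - hB
  obtain ⟨a₁, ha₁⟩ := hd
  refine core_three (b := (2 - rt) * t) (a₁ := a₁) (c := (p : ℤ)) ?_
    (TP_intCast (by exact_mod_cast hp.pos)) ?_ (by exact_mod_cast ha₁.symm)
  · exact TP_two_add.mul (by exact_mod_cast TP_intCast (a := r) (by omega))
  · have : (p : Rt) + 1 = 8 * r * t := by exact_mod_cast congrArg (Nat.cast : ℕ → Rt) hpt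
    push_cast
    linear_combination this + 4 * r * t * rt_sq

/-- For norm `2 k²`, write `n = (2 + √2) n₀`, where `n₀` has norm `k²`. With `c = tr n₀ + 2 k`, a
positive integer, `n₀ c = (n₀ + k)²`, so `n` is `(2 + √2) c` up to squares. -/
lemma three_of_square {n : Rt} (hn : TP n) (hre : Even n.re) {k : ℕ} (hN : n.norm = 2 * k ^ 2) :
    SumThree n := by
  obtain ⟨m, hm⟩ := rt_dvd_iff.2 hre
  obtain ⟨n₀, hn₀⟩ : ∃ n₀ : Rt, n₀ = (rt - 1) * m := ⟨_, rfl⟩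
  have e : n = (2 + rt) * n₀ := by
    rw [hn₀, hm]; linear_combination -m * rt_sq
  have hn₀p : TP n₀ := TP_two_add.of_mul (e ▸ hn)
  have hN₀ : n₀.norm = k ^ 2 := by
    have h := hN
    rw [e, Zsqrtd.norm_mul, show ((2 : Rt) + rt).norm = 2 by decide] at h
    linarith
  have hre := hn₀p.re_pos
  obtain ⟨c, hc⟩ : ∃ c : ℕ, (c : ℤ) = 2 * n₀.re + 2 * k := ⟨(2 * n₀.re + 2 * k).toNat, by omega⟩
  have hc0 : c ≠ 0 := by omega
  have hcR : (c : Rt) = n₀ + star n₀ + 2 * k := by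
    have : (c : Rt) = ((2 * n₀.re + 2 * k : ℤ) : Rt) := by rw [← hc]; simp
    rw [this]
    ext <;> simp <;> ring
  have hkR : (k : Rt) ^ 2 = n₀ * star n₀ := by
    rw [← Zsqrtd.norm_eq_mul_conj, hN₀]; simp
  obtain ⟨i, r, hr, hcr⟩ := Nat.exists_eq_two_pow_mul_odd hc0
  obtain ⟨d, x, y, z, hd, h⟩ := (three_of_special hr).sq_mul (rt ^ i)
  have h' : d ^ 2 * ((2 + rt) * c) = x ^ 2 + y ^ 2 + z ^ 2 := by
    rw [← h, hcr]
    push_cast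
    rw [← pow_mul, mul_comm i 2, pow_mul, rt_sq]; ring
  refine ⟨c * d, (n₀ + k) * x, (n₀ + k) * y, (n₀ + k) * z,
    mul_ne_zero (by exact_mod_cast hc0) hd, ?_⟩
  have key : n₀ * c = (n₀ + k) ^ 2 := by rw [hcR]; linear_combination -hkR
  rw [e]
  linear_combination (n₀ + k) ^ 2 * h' + c * d ^ 2 * (2 + rt) * key

/-- Every totally positive element of `ℤ[√2]` is, up to a nonzero square, a sum of three squares. -/
lemma three_of_TP {n : Rt} (hn : TP n) : SumThree n := by
  obtain ⟨k, hk⟩ : ∃ k : ℕ, n.re.toNat = k := ⟨_, rfl⟩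
  induction k using Nat.strong_induction_on generalizing n with
  | _ k ih =>
  by_cases h1 : Even n.re
  · by_cases h2 : Even n.im
    · obtain ⟨m, rfl⟩ := two_dvd_iff.2 ⟨h1, h2⟩
      have hm : TP m := TP.of_mul (x := 2) (by exact_mod_cast TP_intCast (a := 2) (by norm_num)) hn
      have h0 := hm.re_pos
      have h3 := ih m.re.toNat (by rw [← hk]; simp; omega) hm rfl
      rw [← rt_sq]
      exact h3.sq_mul rt
    · obtain ⟨N, hN, hN0⟩ := exists_norm_nat hn
      rw [Int.not_even_iff_odd] at h2
      obtain ⟨i, hi⟩ := h1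
      obtain ⟨j, hj⟩ := h2
      have hd : (N : ℤ) = 2 * (2 * (i ^ 2 - 2 * j ^ 2 - 2 * j - 1) + 1) := by
        rw [← hN, Zsqrtd.norm_def, hi, hj]; ring
      obtain ⟨M, hM⟩ : ∃ M, N = 2 * M := ⟨N / 2, by omega⟩
      have hMo : Odd M := Nat.odd_iff.2 (by omega)
      by_cases hsq : IsSquare M
      · obtain ⟨k, rfl⟩ := hsq
        refine three_of_square hn ⟨i, hi⟩ (k := k) ?_
        rw [hN, hM]; push_cast; ring
      · exact three_of_nonsquare hn (hM ▸ hN) hMo hsq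
  · refine three_of_odd hn ?_
    rw [Int.not_even_iff_odd] at h1
    rw [Zsqrtd.norm_def]
    have := h1.mul h1
    rw [show n.re * n.re - 2 * n.im * n.im = n.re * n.re - 2 * (n.im * n.im) by ring]
    exact this.sub_even (even_two_mul _)

end FiveSq

/-! ### A maximal order in the quaternion algebra `(-1, -1)` -/

namespace FiveSq

/-- A maximal order in the quaternion algebra `(-1, -1)` over `ℚ(√2)`: the element
`⟨a, b, c, d⟩` stands for `a + b u + c v + d u v` with `u = (1 + i) / √2` and `v = (1 + j) / √2`. -/
@[ext]
structure Quo where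
  a : Rt
  b : Rt
  c : Rt
  d : Rt

namespace Quo

instance : Zero Quo := ⟨⟨0, 0, 0, 0⟩⟩
instance : One Quo := ⟨⟨1, 0, 0, 0⟩⟩
instance : Add Quo := ⟨fun x y => ⟨x.a + y.a, x.b + y.b, x.c + y.c, x.d + y.d⟩⟩
instance : Neg Quo := ⟨fun x => ⟨-x.a, -x.b, -x.c, -x.d⟩⟩
instance : Mul Quo := ⟨fun x y =>
  ⟨x.a * y.a - x.b * y.b - x.c * y.b - x.c * y.c - x.d * y.d - rt * (x.c * y.d + x.d * y.b),
   x.a * y.b + x.b * y.a + rt * (x.b * y.b + x.c * y.b) + x.c * y.d + x.d * y.b - x.d * y.c,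
   x.a * y.c + x.c * y.a + rt * (x.c * y.b + x.c * y.c) - x.b * y.d + x.c * y.d + x.d * y.b,
   x.a * y.d + x.d * y.a + x.b * y.c - x.c * y.b + rt * (x.b * y.d + x.d * y.c) + x.d * y.d⟩⟩

@[simp] lemma zero_a : (0 : Quo).a = 0 := rfl
@[simp] lemma zero_b : (0 : Quo).b = 0 := rfl
@[simp] lemma zero_c : (0 : Quo).c = 0 := rfl
@[simp] lemma zero_d : (0 : Quo).d = 0 := rfl
@[simp] lemma one_a : (1 : Quo).a = 1 := rfl
@[simp] lemma one_b : (1 : Quo).b = 0 := rfl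
@[simp] lemma one_c : (1 : Quo).c = 0 := rfl
@[simp] lemma one_d : (1 : Quo).d = 0 := rfl
variable (x y : Quo)
@[simp] lemma add_a : (x + y).a = x.a + y.a := rfl
@[simp] lemma add_b : (x + y).b = x.b + y.b := rfl
@[simp] lemma add_c : (x + y).c = x.c + y.c := rfl
@[simp] lemma add_d : (x + y).d = x.d + y.d := rfl
@[simp] lemma neg_a : (-x).a = -x.a := rfl
@[simp] lemma neg_b : (-x).b = -x.b := rfl
@[simp] lemma neg_c : (-x).c = -x.c := rfl
@[simp] lemma neg_d : (-x).d = -x.d := rfl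
@[simp] lemma mul_a : (x * y).a = x.a * y.a - x.b * y.b - x.c * y.b - x.c * y.c - x.d * y.d
    - rt * (x.c * y.d + x.d * y.b) := rfl
@[simp] lemma mul_b : (x * y).b = x.a * y.b + x.b * y.a + rt * (x.b * y.b + x.c * y.b)
    + x.c * y.d + x.d * y.b - x.d * y.c := rfl
@[simp] lemma mul_c : (x * y).c = x.a * y.c + x.c * y.a + rt * (x.c * y.b + x.c * y.c)
    - x.b * y.d + x.c * y.d + x.d * y.b := rfl
@[simp] lemma mul_d : (x * y).d = x.a * y.d + x.d * y.a + x.b * y.c - x.c * y.b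
    + rt * (x.b * y.d + x.d * y.c) + x.d * y.d := rfl

instance : Ring Quo where
  add_assoc x y z := by ext1 <;> simp only [add_a, add_b, add_c, add_d] <;> ring
  zero_add x := by ext1 <;> simp
  add_zero x := by ext1 <;> simp
  add_comm x y := by ext1 <;> simp only [add_a, add_b, add_c, add_d] <;> ring
  neg_add_cancel x := by ext1 <;> simp
  nsmul := nsmulRec
  zsmul := zsmulRec
  zero_mul x := by ext1 <;> simp
  mul_zero x := by ext1 <;> simp
  one_mul x := by ext1 <;> simp
  mul_one x := by ext1 <;> simp
  left_distrib x y z := by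
    ext1 <;> simp only [add_a, add_b, add_c, add_d, mul_a, mul_b, mul_c, mul_d] <;> ring
  right_distrib x y z := by
    ext1 <;> simp only [add_a, add_b, add_c, add_d, mul_a, mul_b, mul_c, mul_d] <;> ring
  mul_assoc x y z := by
    have := rt_sq
    ext1 <;> simp only [mul_a, mul_b, mul_c, mul_d] <;> grind

@[simp] lemma sub_a : (x - y).a = x.a - y.a := by rw [sub_eq_add_neg, sub_eq_add_neg]; rfl
@[simp] lemma sub_b : (x - y).b = x.b - y.b := by rw [sub_eq_add_neg, sub_eq_add_neg]; rfl
@[simp] lemma sub_c : (x - y).c = x.c - y.c := by rw [sub_eq_add_neg, sub_eq_add_neg]; rfl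
@[simp] lemma sub_d : (x - y).d = x.d - y.d := by rw [sub_eq_add_neg, sub_eq_add_neg]; rfl

/-- The inclusion of the scalars. -/
def C : Rt →+* Quo where
  toFun m := ⟨m, 0, 0, 0⟩
  map_zero' := rfl
  map_one' := rfl
  map_add' x y := by ext1 <;> simp
  map_mul' x y := by ext1 <;> simp

variable (m : Rt)
@[simp] lemma C_a : (C m).a = m := rfl
@[simp] lemma C_b : (C m).b = 0 := rfl
@[simp] lemma C_c : (C m).c = 0 := rfl
@[simp] lemma C_d : (C m).d = 0 := rfl

lemma C_mul_a : (C m * x).a = m * x.a := by simp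
lemma C_mul_b : (C m * x).b = m * x.b := by simp
lemma C_mul_c : (C m * x).c = m * x.c := by simp
lemma C_mul_d : (C m * x).d = m * x.d := by simp

lemma C_comm : C m * x = x * C m := by ext1 <;> simp [mul_comm]

lemma C_inj {m n : Rt} (h : C m = C n) : m = n := congrArg Quo.a h

/-- The reduced trace. -/
def tr : Rt := 2 * x.a + rt * (x.b + x.c) + x.d

/-- The reduced norm. -/
def nrd : Rt := x.a ^ 2 + x.b ^ 2 + x.c ^ 2 + x.d ^ 2
  + rt * (x.a * x.b + x.a * x.c + x.b * x.d + x.c * x.d) + x.a * x.d + x.b * x.c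

/-- Quaternion conjugation. -/
def conj : Quo := C x.tr - x

@[simp] lemma conj_a : x.conj.a = x.tr - x.a := by simp [conj, -map_add, -map_mul]
@[simp] lemma conj_b : x.conj.b = -x.b := by simp [conj]
@[simp] lemma conj_c : x.conj.c = -x.c := by simp [conj]
@[simp] lemma conj_d : x.conj.d = -x.d := by simp [conj]

lemma mul_conj : x * x.conj = C x.nrd := by
  have := rt_sq
  ext1 <;> simp only [mul_a, mul_b, mul_c, mul_d, conj_a, conj_b, conj_c, conj_d, C_a, C_b, C_c,
    C_d, tr, nrd] <;> grind

lemma conj_mul_self : x.conj * x = C x.nrd := by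
  have := rt_sq
  ext1 <;> simp only [mul_a, mul_b, mul_c, mul_d, conj_a, conj_b, conj_c, conj_d, C_a, C_b, C_c,
    C_d, tr, nrd] <;> grind

lemma sq_eq : x * x = C x.tr * x - C x.nrd := by
  rw [← conj_mul_self, conj]; noncomm_ring

lemma nrd_mul : (x * y).nrd = x.nrd * y.nrd := by
  have := rt_sq
  simp only [nrd, mul_a, mul_b, mul_c, mul_d]
  grind

lemma tr_mul_comm : (x * y).tr = (y * x).tr := by
  have := rt_sq
  simp only [tr, mul_a, mul_b, mul_c, mul_d]
  grind

lemma tr_C_mul : (C m * x).tr = m * x.tr := by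
  simp [tr]; ring

lemma tr_add : (x + y).tr = x.tr + y.tr := by
  simp [tr]; ring

lemma tr_C : (C m).tr = 2 * m := by simp [tr]

lemma nrd_C : (C m).nrd = m ^ 2 := by simp [nrd]

lemma nrd_add_C : (x + C m).nrd = x.nrd + m * x.tr + m ^ 2 := by simp [nrd, tr]; ring

lemma conj_mul : (x * y).conj = y.conj * x.conj := by
  have := rt_sq
  ext1 <;> simp only [mul_a, mul_b, mul_c, mul_d, conj_a, conj_b, conj_c, conj_d, tr] <;> grind

end Quo
end FiveSq

/-! ### The maximal order is norm-Euclidean -/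

namespace FiveSq

/-- Rounding `P / M` to an integer of either parity; `y / M` is twice the distance of `P / M` to the
nearest half-integer. -/
lemma round_one (P : ℤ) {M : ℤ} (hM : 0 < M) : ∃ p₀ y : ℤ, 0 ≤ y ∧ y ≤ M ∧
    ∀ f : ℤ, f = 0 ∨ f = 1 → ∃ p : ℤ, 2 ∣ p - p₀ - f ∧
      4 * (P - M * p) ^ 2 ≤ M * (M - y) + 4 * (f * y) * M := by
  have hdiv := Int.mul_ediv_add_emod P M
  have h0 := Int.emod_nonneg P hM.ne'
  have h1 := Int.emod_lt_of_pos P hM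
  obtain ⟨q, hq⟩ : ∃ q, q = P / M := ⟨_, rfl⟩
  obtain ⟨r, hr⟩ : ∃ r, r = P % M := ⟨_, rfl⟩
  rw [← hq, ← hr] at hdiv
  rw [← hr] at h0 h1
  by_cases h : 2 * r ≤ M
  · refine ⟨q, M - 2 * r, by omega, by omega, ?_⟩
    rintro f (rfl | rfl)
    · refine ⟨q, by simp, ?_⟩
      rw [show P - M * q = r by linarith]
      nlinarith
    · refine ⟨q + 1, by simp, ?_⟩
      rw [show P - M * (q + 1) = r - M by linarith]
      nlinarith
  · refine ⟨q + 1, 2 * r - M, by omega, by omega, ?_⟩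
    rintro f (rfl | rfl)
    · refine ⟨q + 1, by simp, ?_⟩
      rw [show P - M * (q + 1) = r - M by linarith]
      nlinarith
    · refine ⟨q, by simp, ?_⟩
      rw [show P - M * q = r by linarith]
      nlinarith

/-- The choice of roundings that lands in the lattice: at most two of the eight coordinates are
rounded away from the nearest integer, and two only when there are four disjoint pairs to choose
from. -/
lemma exists_flips (m₀ m₁ m₂ m₃ t : ℤ) {M y₀ y₁ y₂ y₃ z₀ z₁ z₂ z₃ : ℤ}
    (hy : (0 ≤ y₀ ∧ y₀ ≤ M) ∧ (0 ≤ y₁ ∧ y₁ ≤ M) ∧ (0 ≤ y₂ ∧ y₂ ≤ M) ∧ (0 ≤ y₃ ∧ y₃ ≤ M))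
    (hz : (0 ≤ z₀ ∧ z₀ ≤ M) ∧ (0 ≤ z₁ ∧ z₁ ≤ M) ∧ (0 ≤ z₂ ∧ z₂ ≤ M) ∧ (0 ≤ z₃ ∧ z₃ ≤ M)) :
    ∃ f₀ f₁ f₂ f₃ g₀ g₁ g₂ g₃ : ℤ,
      ((f₀ = 0 ∨ f₀ = 1) ∧ (f₁ = 0 ∨ f₁ = 1) ∧ (f₂ = 0 ∨ f₂ = 1) ∧ (f₃ = 0 ∨ f₃ = 1) ∧
      (g₀ = 0 ∨ g₀ = 1) ∧ (g₁ = 0 ∨ g₁ = 1) ∧ (g₂ = 0 ∨ g₂ = 1) ∧ (g₃ = 0 ∨ g₃ = 1)) ∧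
      2 ∣ m₁ - m₀ + f₁ + g₁ - f₀ - g₀ ∧ 2 ∣ m₂ - m₀ + f₂ + g₂ - f₀ - g₀ ∧
      2 ∣ m₃ - m₀ + f₃ + g₃ - f₀ - g₀ ∧ 2 ∣ t + g₀ + g₁ + g₂ + g₃ ∧
      4 * (f₀ * y₀ + f₁ * y₁ + f₂ * y₂ + f₃ * y₃ + g₀ * z₀ + g₁ * z₁ + g₂ * z₂ + g₃ * z₃)
        ≤ 3 * M + (y₀ + y₁ + y₂ + y₃ + z₀ + z₁ + z₂ + z₃) := by
  obtain ⟨⟨a0, b0⟩, ⟨a1, b1⟩, ⟨a2, b2⟩, ⟨a3, b3⟩⟩ := hy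
  obtain ⟨⟨c0, d0⟩, ⟨c1, d1⟩, ⟨c2, d2⟩, ⟨c3, d3⟩⟩ := hz
  rcases (by omega : t % 2 = 0 ∨ t % 2 = 1) with ht | ht <;>
  rcases (by omega : (m₁ - m₀) % 2 = 0 ∨ (m₁ - m₀) % 2 = 1) with h1 | h1 <;>
  rcases (by omega : (m₂ - m₀) % 2 = 0 ∨ (m₂ - m₀) % 2 = 1) with h2 | h2 <;>
  rcases (by omega : (m₃ - m₀) % 2 = 0 ∨ (m₃ - m₀) % 2 = 1) with h3 | h3
  · exact ⟨0, 0, 0, 0, 0, 0, 0, 0, by simp, by omega⟩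
  · exact ⟨0, 0, 0, 1, 0, 0, 0, 0, by simp, by omega⟩
  · exact ⟨0, 0, 1, 0, 0, 0, 0, 0, by simp, by omega⟩
  · by_cases e1 : 4 * (y₀ + y₁) ≤ y₀ + y₁ + y₂ + y₃ + z₀ + z₁ + z₂ + z₃
    · exact ⟨1, 1, 0, 0, 0, 0, 0, 0, by simp, by omega⟩
    by_cases e2 : 4 * (z₀ + z₁) ≤ y₀ + y₁ + y₂ + y₃ + z₀ + z₁ + z₂ + z₃
    · exact ⟨0, 0, 0, 0, 1, 1, 0, 0, by simp, by omega⟩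
    by_cases e3 : 4 * (y₂ + y₃) ≤ y₀ + y₁ + y₂ + y₃ + z₀ + z₁ + z₂ + z₃
    · exact ⟨0, 0, 1, 1, 0, 0, 0, 0, by simp, by omega⟩
    · exact ⟨0, 0, 0, 0, 0, 0, 1, 1, by simp, by omega⟩
  · exact ⟨0, 1, 0, 0, 0, 0, 0, 0, by simp, by omega⟩
  · by_cases e1 : 4 * (y₀ + y₂) ≤ y₀ + y₁ + y₂ + y₃ + z₀ + z₁ + z₂ + z₃
    · exact ⟨1, 0, 1, 0, 0, 0, 0, 0, by simp, by omega⟩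
    by_cases e2 : 4 * (z₀ + z₂) ≤ y₀ + y₁ + y₂ + y₃ + z₀ + z₁ + z₂ + z₃
    · exact ⟨0, 0, 0, 0, 1, 0, 1, 0, by simp, by omega⟩
    by_cases e3 : 4 * (y₁ + y₃) ≤ y₀ + y₁ + y₂ + y₃ + z₀ + z₁ + z₂ + z₃
    · exact ⟨0, 1, 0, 1, 0, 0, 0, 0, by simp, by omega⟩
    · exact ⟨0, 0, 0, 0, 0, 1, 0, 1, by simp, by omega⟩
  · by_cases e1 : 4 * (y₀ + y₃) ≤ y₀ + y₁ + y₂ + y₃ + z₀ + z₁ + z₂ + z₃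
    · exact ⟨1, 0, 0, 1, 0, 0, 0, 0, by simp, by omega⟩
    by_cases e2 : 4 * (z₀ + z₃) ≤ y₀ + y₁ + y₂ + y₃ + z₀ + z₁ + z₂ + z₃
    · exact ⟨0, 0, 0, 0, 1, 0, 0, 1, by simp, by omega⟩
    by_cases e3 : 4 * (y₁ + y₂) ≤ y₀ + y₁ + y₂ + y₃ + z₀ + z₁ + z₂ + z₃
    · exact ⟨0, 1, 1, 0, 0, 0, 0, 0, by simp, by omega⟩
    · exact ⟨0, 0, 0, 0, 0, 1, 1, 0, by simp, by omega⟩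
  · exact ⟨1, 0, 0, 0, 0, 0, 0, 0, by simp, by omega⟩
  · by_cases e1 : 4 * (y₀ + z₀) ≤ y₀ + y₁ + y₂ + y₃ + z₀ + z₁ + z₂ + z₃
    · exact ⟨1, 0, 0, 0, 1, 0, 0, 0, by simp, by omega⟩
    by_cases e2 : 4 * (y₁ + z₁) ≤ y₀ + y₁ + y₂ + y₃ + z₀ + z₁ + z₂ + z₃
    · exact ⟨0, 1, 0, 0, 0, 1, 0, 0, by simp, by omega⟩
    by_cases e3 : 4 * (y₂ + z₂) ≤ y₀ + y₁ + y₂ + y₃ + z₀ + z₁ + z₂ + z₃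
    · exact ⟨0, 0, 1, 0, 0, 0, 1, 0, by simp, by omega⟩
    · exact ⟨0, 0, 0, 1, 0, 0, 0, 1, by simp, by omega⟩
  · exact ⟨0, 0, 0, 0, 0, 0, 0, 1, by simp, by omega⟩
  · exact ⟨0, 0, 0, 0, 0, 0, 1, 0, by simp, by omega⟩
  · by_cases e1 : 4 * (y₀ + z₁) ≤ y₀ + y₁ + y₂ + y₃ + z₀ + z₁ + z₂ + z₃
    · exact ⟨1, 0, 0, 0, 0, 1, 0, 0, by simp, by omega⟩
    by_cases e2 : 4 * (z₀ + y₁) ≤ y₀ + y₁ + y₂ + y₃ + z₀ + z₁ + z₂ + z₃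
    · exact ⟨0, 1, 0, 0, 1, 0, 0, 0, by simp, by omega⟩
    by_cases e3 : 4 * (y₂ + z₃) ≤ y₀ + y₁ + y₂ + y₃ + z₀ + z₁ + z₂ + z₃
    · exact ⟨0, 0, 1, 0, 0, 0, 0, 1, by simp, by omega⟩
    · exact ⟨0, 0, 0, 1, 0, 0, 1, 0, by simp, by omega⟩
  · exact ⟨0, 0, 0, 0, 0, 1, 0, 0, by simp, by omega⟩
  · by_cases e1 : 4 * (y₀ + z₂) ≤ y₀ + y₁ + y₂ + y₃ + z₀ + z₁ + z₂ + z₃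
    · exact ⟨1, 0, 0, 0, 0, 0, 1, 0, by simp, by omega⟩
    by_cases e2 : 4 * (z₀ + y₂) ≤ y₀ + y₁ + y₂ + y₃ + z₀ + z₁ + z₂ + z₃
    · exact ⟨0, 0, 1, 0, 1, 0, 0, 0, by simp, by omega⟩
    by_cases e3 : 4 * (y₁ + z₃) ≤ y₀ + y₁ + y₂ + y₃ + z₀ + z₁ + z₂ + z₃
    · exact ⟨0, 1, 0, 0, 0, 0, 0, 1, by simp, by omega⟩
    · exact ⟨0, 0, 0, 1, 0, 1, 0, 0, by simp, by omega⟩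
  · by_cases e1 : 4 * (y₀ + z₃) ≤ y₀ + y₁ + y₂ + y₃ + z₀ + z₁ + z₂ + z₃
    · exact ⟨1, 0, 0, 0, 0, 0, 0, 1, by simp, by omega⟩
    by_cases e2 : 4 * (z₀ + y₃) ≤ y₀ + y₁ + y₂ + y₃ + z₀ + z₁ + z₂ + z₃
    · exact ⟨0, 0, 0, 1, 1, 0, 0, 0, by simp, by omega⟩
    by_cases e3 : 4 * (y₁ + z₂) ≤ y₀ + y₁ + y₂ + y₃ + z₀ + z₁ + z₂ + z₃
    · exact ⟨0, 1, 0, 0, 0, 0, 1, 0, by simp, by omega⟩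
    · exact ⟨0, 0, 1, 0, 0, 1, 0, 0, by simp, by omega⟩
  · exact ⟨0, 0, 0, 0, 1, 0, 0, 0, by simp, by omega⟩

/-- Rounding an eight-tuple of rationals to the lattice described by the maximal order. -/
lemma exists_round_eight (P₀ P₁ P₂ P₃ V₀ V₁ V₂ V₃ : ℤ) {M : ℤ} (hM : 0 < M) :
    ∃ p₀ p₁ p₂ p₃ v₀ v₁ v₂ v₃ : ℤ,
      2 ∣ p₁ + v₁ - p₀ - v₀ ∧ 2 ∣ p₂ + v₂ - p₀ - v₀ ∧ 2 ∣ p₃ + v₃ - p₀ - v₀ ∧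
      2 ∣ v₀ + v₁ + v₂ + v₃ ∧
      4 * ((P₀ - M * p₀) ^ 2 + (P₁ - M * p₁) ^ 2 + (P₂ - M * p₂) ^ 2 + (P₃ - M * p₃) ^ 2 +
        (V₀ - M * v₀) ^ 2 + (V₁ - M * v₁) ^ 2 + (V₂ - M * v₂) ^ 2 + (V₃ - M * v₃) ^ 2)
        ≤ 11 * M ^ 2 := by
  obtain ⟨p₀, y₀, hy₀, hy₀', H₀⟩ := round_one P₀ hM
  obtain ⟨p₁, y₁, hy₁, hy₁', H₁⟩ := round_one P₁ hM
  obtain ⟨p₂, y₂, hy₂, hy₂', H₂⟩ := round_one P₂ hM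
  obtain ⟨p₃, y₃, hy₃, hy₃', H₃⟩ := round_one P₃ hM
  obtain ⟨v₀, z₀, hz₀, hz₀', G₀⟩ := round_one V₀ hM
  obtain ⟨v₁, z₁, hz₁, hz₁', G₁⟩ := round_one V₁ hM
  obtain ⟨v₂, z₂, hz₂, hz₂', G₂⟩ := round_one V₂ hM
  obtain ⟨v₃, z₃, hz₃, hz₃', G₃⟩ := round_one V₃ hM
  obtain ⟨f₀, f₁, f₂, f₃, g₀, g₁, g₂, g₃, ⟨hf₀, hf₁, hf₂, hf₃, hg₀, hg₁, hg₂, hg₃⟩,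
    e1, e2, e3, e4, e5⟩ := exists_flips (p₀ + v₀) (p₁ + v₁) (p₂ + v₂) (p₃ + v₃)
      (v₀ + v₁ + v₂ + v₃) ⟨⟨hy₀, hy₀'⟩, ⟨hy₁, hy₁'⟩, ⟨hy₂, hy₂'⟩, ⟨hy₃, hy₃'⟩⟩
      ⟨⟨hz₀, hz₀'⟩, ⟨hz₁, hz₁'⟩, ⟨hz₂, hz₂'⟩, ⟨hz₃, hz₃'⟩⟩
  obtain ⟨p₀', c₀, k₀⟩ := H₀ f₀ hf₀
  obtain ⟨p₁', c₁, k₁⟩ := H₁ f₁ hf₁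
  obtain ⟨p₂', c₂, k₂⟩ := H₂ f₂ hf₂
  obtain ⟨p₃', c₃, k₃⟩ := H₃ f₃ hf₃
  obtain ⟨v₀', d₀, l₀⟩ := G₀ g₀ hg₀
  obtain ⟨v₁', d₁, l₁⟩ := G₁ g₁ hg₁
  obtain ⟨v₂', d₂, l₂⟩ := G₂ g₂ hg₂
  obtain ⟨v₃', d₃, l₃⟩ := G₃ g₃ hg₃
  clear H₀ H₁ H₂ H₃ G₀ G₁ G₂ G₃ hf₀ hf₁ hf₂ hf₃ hg₀ hg₁ hg₂ hg₃
  refine ⟨p₀', p₁', p₂', p₃', v₀', v₁', v₂', v₃', ?_, ?_, ?_, ?_, ?_⟩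
  · clear k₀ k₁ k₂ k₃ l₀ l₁ l₂ l₃ e5; omega
  · clear k₀ k₁ k₂ k₃ l₀ l₁ l₂ l₃ e5; omega
  · clear k₀ k₁ k₂ k₃ l₀ l₁ l₂ l₃ e5; omega
  · clear k₀ k₁ k₂ k₃ l₀ l₁ l₂ l₃ e5; omega
  · have := mul_le_mul_of_nonneg_left e5 hM.le
    linarith

namespace Quo

/-- The norm in terms of the coordinates of `2 x` with respect to `1, i, j, k`. -/
lemma four_nrd (x : Quo) : 4 * x.nrd = x.tr ^ 2 + (rt * x.b + x.d) ^ 2 + (rt * x.c + x.d) ^ 2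
    + x.d ^ 2 := by
  have := rt_sq
  simp only [nrd, tr]
  grind

lemma nrd_zero : (0 : Quo).nrd = 0 := by simp [nrd]

lemma nrd_eq_zero {x : Quo} (h : x.nrd = 0) : x = 0 := by
  have h4 := congrArg sA (four_nrd x)
  rw [h] at h4
  simp only [mul_zero, map_zero, map_add, map_pow] at h4
  have n1 := sq_nonneg (sA x.tr)
  have n2 := sq_nonneg (sA rt * sA x.b + sA x.d)
  have n3 := sq_nonneg (sA rt * sA x.c + sA x.d)
  have n4 := sq_nonneg (sA x.d)
  simp only [map_mul] at h4
  have z4 : x.d = 0 := by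
    by_contra h0; exact sA_ne_zero h0 (pow_eq_zero_iff two_ne_zero |>.1 (by linarith))
  have z2 : rt * x.b + x.d = 0 := by
    by_contra h0; refine sA_ne_zero h0 (pow_eq_zero_iff two_ne_zero |>.1 ?_)
    rw [map_add, map_mul]; linarith
  have z3 : rt * x.c + x.d = 0 := by
    by_contra h0; refine sA_ne_zero h0 (pow_eq_zero_iff two_ne_zero |>.1 ?_)
    rw [map_add, map_mul]; linarith
  have z1 : x.tr = 0 := by
    by_contra h0; exact sA_ne_zero h0 (pow_eq_zero_iff two_ne_zero |>.1 (by linarith))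
  rw [z4, add_zero] at z2 z3
  have zb := (mul_eq_zero.1 z2).resolve_left rt_ne_zero
  have zc := (mul_eq_zero.1 z3).resolve_left rt_ne_zero
  rw [tr, z4, zb, zc] at z1
  simp only [add_zero, mul_zero] at z1
  have za := (mul_eq_zero.1 z1).resolve_left two_ne_zero'
  ext1 <;> assumption

lemma TP_nrd {x : Quo} (h : x ≠ 0) : TP x.nrd := by
  have e := four_nrd x
  have eA := congrArg sA e
  have eB := congrArg sB e
  simp only [map_add, map_pow, map_mul, map_ofNat] at eA eB
  exact TP_of_nonneg (fun h0 => h (nrd_eq_zero h0)) (by nlinarith) (by nlinarith)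

lemma nrd_ne_zero {x : Quo} (h : x ≠ 0) : x.nrd ≠ 0 := (TP_nrd h).ne_zero

instance : NoZeroDivisors Quo where
  eq_zero_or_eq_zero_of_mul_eq_zero {x y} h := by
    have := congrArg nrd h
    rw [nrd_mul, nrd_zero, mul_eq_zero] at this
    exact this.imp nrd_eq_zero nrd_eq_zero

instance : Nontrivial Quo := ⟨0, 1, fun h => by simpa using congrArg Quo.a h⟩

lemma C_ne_zero {m : Rt} (h : m ≠ 0) : C m ≠ 0 := fun h0 => h (C_inj (h0.trans C.map_zero.symm))

/-- Rounding the quotient `w / M` to the order leaves a remainder of smaller norm. -/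
lemma nrd_sub_C_mul_round (w : Quo) {M : ℤ} (hM : 0 < M) :
    ∃ s : Quo, (w - C M * s).nrd.norm < M ^ 4 := by
  obtain ⟨p₀, p₁, p₂, p₃, v₀, v₁, v₂, v₃, e1, e2, e3, e4, e5⟩ := exists_round_eight
    (w.tr.re + w.tr.im) ((rt * w.b + w.d).re + (rt * w.b + w.d).im)
    ((rt * w.c + w.d).re + (rt * w.c + w.d).im) (w.d.re + w.d.im)
    w.tr.im (rt * w.b + w.d).im (rt * w.c + w.d).im w.d.im hM
  -- the coordinates of `2 s` with respect to `1, i, j, k`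
  obtain ⟨A₀, r₀, i₀⟩ : ∃ A : Rt, A.re = p₀ - v₀ ∧ A.im = v₀ := ⟨⟨_, _⟩, rfl, rfl⟩
  obtain ⟨A₁, r₁, i₁⟩ : ∃ A : Rt, A.re = p₁ - v₁ ∧ A.im = v₁ := ⟨⟨_, _⟩, rfl, rfl⟩
  obtain ⟨A₂, r₂, i₂⟩ : ∃ A : Rt, A.re = p₂ - v₂ ∧ A.im = v₂ := ⟨⟨_, _⟩, rfl, rfl⟩
  obtain ⟨A₃, r₃, i₃⟩ : ∃ A : Rt, A.re = p₃ - v₃ ∧ A.im = v₃ := ⟨⟨_, _⟩, rfl, rfl⟩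
  obtain ⟨b, hb⟩ : rt ∣ A₁ - A₃ :=
    rt_dvd_iff.2 (by simp only [Zsqrtd.re_sub, Int.even_iff]; omega)
  obtain ⟨c, hc⟩ : rt ∣ A₂ - A₃ :=
    rt_dvd_iff.2 (by simp only [Zsqrtd.re_sub, Int.even_iff]; omega)
  obtain ⟨a, ha⟩ : 2 ∣ A₀ - A₁ - A₂ + A₃ :=
    two_dvd_iff.2 (by
      simp only [Zsqrtd.re_sub, Int.even_iff, Zsqrtd.re_add, Zsqrtd.im_sub, Zsqrtd.im_add]
      constructor <;> omega)
  refine ⟨⟨a, b, c, A₃⟩, ?_⟩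
  set s : Quo := ⟨a, b, c, A₃⟩ with hs
  have f3 : (w - C M * s).d = w.d - M * A₃ := by simp only [sub_d, C_mul_d, hs]
  have f1 : rt * (w - C M * s).b + (w - C M * s).d = (rt * w.b + w.d) - M * A₁ := by
    rw [f3]; simp only [sub_b, C_mul_b, hs]; linear_combination (M : Rt) * hb
  have f2 : rt * (w - C M * s).c + (w - C M * s).d = (rt * w.c + w.d) - M * A₂ := by
    rw [f3]; simp only [sub_c, C_mul_c, hs]; linear_combination (M : Rt) * hc
  have f0 : (w - C M * s).tr = w.tr - M * A₀ := by
    simp only [tr, sub_a, sub_b, sub_c, sub_d, C_mul_a, C_mul_b, C_mul_c, C_mul_d, hs]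
    linear_combination (M : Rt) * ha + (M : Rt) * hb + (M : Rt) * hc
  have h4 := four_nrd (w - C M * s)
  rw [f1, f2, f3, f0] at h4
  have hre := congrArg Zsqrtd.re h4
  have him := congrArg Zsqrtd.im h4
  set p := (w - C M * s).nrd.re
  set q := (w - C M * s).nrd.im
  obtain ⟨W₁, hW₁⟩ : ∃ W, W = rt * w.b + w.d := ⟨_, rfl⟩
  obtain ⟨W₂, hW₂⟩ : ∃ W, W = rt * w.c + w.d := ⟨_, rfl⟩
  rw [← hW₁, ← hW₂] at hre him e5
  rw [show (4 : Rt) = ((4 : ℤ) : Rt) by norm_num] at hre him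
  simp only [sq (_ : Rt), Zsqrtd.re_add, Zsqrtd.re_mul, Zsqrtd.re_sub, Zsqrtd.im_add, Zsqrtd.im_mul,
    Zsqrtd.im_sub, Zsqrtd.re_intCast, Zsqrtd.im_intCast, r₀, r₁, r₂, r₃, i₀, i₁, i₂, i₃] at hre him
  have h16 : 16 * (p + q) = 4 * ((w.tr.re + w.tr.im - M * p₀) ^ 2 + (W₁.re + W₁.im - M * p₁) ^ 2 +
      (W₂.re + W₂.im - M * p₂) ^ 2 + (w.d.re + w.d.im - M * p₃) ^ 2 + (w.tr.im - M * v₀) ^ 2 +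
      (W₁.im - M * v₁) ^ 2 + (W₂.im - M * v₂) ^ 2 + (w.d.im - M * v₃) ^ 2) := by
    linear_combination 4 * hre + 4 * him
  have hpq : 0 ≤ 16 * (p + q) := by rw [h16]; positivity
  rw [← h16] at e5
  have h1 : (16 * (p + q)) ^ 2 ≤ (11 * M ^ 2) ^ 2 := pow_le_pow_left₀ hpq e5 2
  have h2 : (w - C M * s).nrd.norm = p * p - 2 * q * q := Zsqrtd.norm_def _
  have h3 : 0 < M ^ 4 := by positivity
  rw [h2]
  nlinarith [sq_nonneg (p + 2 * q)]

/-- The maximal order is norm-Euclidean. -/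
lemma exists_quo_rem (x : Quo) {y : Quo} (hy : y ≠ 0) :
    ∃ s : Quo, (x - y * s).nrd.norm < y.nrd.norm := by
  have hM : 0 < y.nrd.norm := (TP_nrd hy).norm_pos
  obtain ⟨M, hMd⟩ : ∃ M, M = y.nrd.norm := ⟨_, rfl⟩
  obtain ⟨s, hs⟩ := nrd_sub_C_mul_round (y.conj * x * C (star y.nrd)) hM
  refine ⟨s, ?_⟩
  rw [← hMd] at hs hM ⊢
  have hMR : (M : Rt) = y.nrd * star y.nrd := by rw [hMd, Zsqrtd.norm_eq_mul_conj]
  have h1 : y * (y.conj * x * C (star y.nrd) - C M * s) = C M * (x - y * s) := by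
    have : y * (y.conj * x * C (star y.nrd)) = C M * x := by
      rw [← C_comm, ← mul_assoc, ← C_comm, mul_assoc, ← mul_assoc y, mul_conj, ← mul_assoc,
        ← map_mul, mul_comm, hMR]
    rw [mul_sub, this, ← mul_assoc, ← C_comm, mul_sub, mul_assoc]
  have h2 := congrArg (fun z => z.nrd.norm) h1
  simp only [nrd_mul, Zsqrtd.norm_mul, nrd_C] at h2
  rw [← hMd, sq, Zsqrtd.norm_mul, Zsqrtd.norm_intCast] at h2
  have h3 : M ^ 4 * (x - y * s).nrd.norm < M ^ 4 * M := by
    calc M ^ 4 * (x - y * s).nrd.norm = _ := by linear_combination -h2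
      _ < M * M ^ 4 := mul_lt_mul_of_pos_left hs hM
      _ = M ^ 4 * M := mul_comm _ _
  exact lt_of_mul_lt_mul_left h3 (by positivity)

/-- Right ideals on two generators are principal. -/
lemma exists_gcd (x y : Quo) : ∃ z p q x' y' : Quo, z = x * p + y * q ∧ x = z * x' ∧ y = z * y' := by
  obtain ⟨k, hk⟩ : ∃ k : ℕ, y.nrd.norm.toNat = k := ⟨_, rfl⟩
  induction k using Nat.strong_induction_on generalizing x y with
  | _ k ih =>
  by_cases hy : y = 0
  · exact ⟨x, 1, 0, 1, 0, by simp, by simp, by simp [hy]⟩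
  · obtain ⟨s, hs⟩ := exists_quo_rem x hy
    have := (TP_nrd hy).norm_pos
    obtain ⟨z, p, q, y', r', h1, h2, h3⟩ := ih _ (by omega) y (x - y * s) rfl
    refine ⟨z, q, p - s * q, y' * s + r', y', ?_, ?_, h2⟩
    · rw [h1]; noncomm_ring
    · rw [mul_add, ← mul_assoc, ← h2, ← h3]; noncomm_ring

/-- An element with the trace and norm of an integral element is conjugate to an integral element:
if `X / m` has integral trace and norm, there is `s` in the order with the same trace and norm. -/
lemma exists_integral {X : Quo} {m τ ν : Rt} (hm : m ≠ 0) (ht : X.tr = m * τ)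
    (hn : X.nrd = m ^ 2 * ν) : ∃ s : Quo, s.tr = τ ∧ s.nrd = ν := by
  obtain ⟨z, p, q, m', X', h1, h2, h3⟩ := exists_gcd (C m) X
  have hz : z ≠ 0 := by
    rintro rfl; rw [zero_mul] at h2; exact C_ne_zero hm h2
  have hX2 : X * X = C m * (C τ * X) - C m * (C m * C ν) := by
    rw [sq_eq, ht, hn]; simp only [map_mul, map_pow]; noncomm_ring
  refine ⟨X' * (p + C τ * q) - m' * C ν * q, ?_⟩
  set s := X' * (p + C τ * q) - m' * C ν * q with hs
  have key : X * z = C m * (z * s) := by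
    have e : z * s = X * (p + C τ * q) - C m * C ν * q := by
      rw [hs, mul_sub, ← mul_assoc, ← h3, ← mul_assoc z, ← mul_assoc z, ← h2]
    rw [e]
    nth_rewrite 1 [h1]
    rw [mul_add, ← mul_assoc X X, hX2, ← mul_assoc X (C m), ← C_comm, mul_sub, mul_add X,
      ← mul_assoc X (C τ), ← C_comm _ τ]
    noncomm_ring
  have hz0 := nrd_ne_zero hz
  constructor
  · have h := congrArg (fun t => (z.conj * t).tr) key
    rw [tr_mul_comm, mul_assoc, mul_conj, ← C_comm, tr_C_mul, ht, ← mul_assoc z.conj,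
      ← C_comm, mul_assoc (C m), ← mul_assoc z.conj, conj_mul_self, tr_C_mul, tr_C_mul] at h
    apply mul_left_cancel₀ (mul_ne_zero hm hz0)
    linear_combination -h
  · have h := congrArg nrd key
    simp only [nrd_mul, nrd_C, hn] at h
    apply mul_left_cancel₀ (mul_ne_zero (pow_ne_zero 2 hm) hz0)
    linear_combination -h

end Quo
end FiveSq

/-! ### The Lipschitz order and its unit translates -/

namespace FiveSq
namespace Quo

/-- The quaternion `x₀ + x₁ i + x₂ j + x₃ k`. -/
def lip (x₀ x₁ x₂ x₃ : Rt) : Quo :=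
  ⟨x₀ - x₁ - x₂ + x₃, rt * (x₁ - x₃), rt * (x₂ - x₃), 2 * x₃⟩

lemma tr_lip (x₀ x₁ x₂ x₃ : Rt) : (lip x₀ x₁ x₂ x₃).tr = 2 * x₀ := by
  simp only [lip, tr]; linear_combination (x₁ + x₂ - 2 * x₃) * rt_sq

lemma nrd_lip (x₀ x₁ x₂ x₃ : Rt) :
    (lip x₀ x₁ x₂ x₃).nrd = x₀ ^ 2 + x₁ ^ 2 + x₂ ^ 2 + x₃ ^ 2 := by
  have := rt_sq
  simp only [lip, nrd]; grind

lemma tr_conj_lip (x₀ x₁ x₂ x₃ y₀ y₁ y₂ y₃ : Rt) :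
    ((lip x₀ x₁ x₂ x₃).conj * lip y₀ y₁ y₂ y₃).tr
      = 2 * (x₀ * y₀ + x₁ * y₁ + x₂ * y₂ + x₃ * y₃) := by
  have := rt_sq
  rw [tr]
  simp only [mul_a, mul_b, mul_c, mul_d, conj_a, conj_b, conj_c, conj_d, tr_lip]
  simp only [lip]
  grind

lemma exists_pure {n : Rt} (hn : TP n) : ∃ s : Quo, s.tr = 0 ∧ s.nrd = n := by
  obtain ⟨d, x, y, z, hd, h⟩ := three_of_TP hn
  exact exists_integral (X := lip 0 x y z) hd (by rw [tr_lip]; ring)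
    (by rw [nrd_lip]; linear_combination -h)

/-- An integral element in the role of `(1 + √-n) / √2`; it exists when `n ≡ -1` modulo `2`. -/
lemma exists_half {n κ : Rt} (hn : TP n) (hκ : 1 + n = 2 * κ) :
    ∃ s : Quo, s.tr = rt ∧ s.nrd = κ := by
  obtain ⟨d, x, y, z, hd, h⟩ := three_of_TP hn
  exact exists_integral (X := lip d x y z) (mul_ne_zero rt_ne_zero hd)
    (by rw [tr_lip]; linear_combination -d * rt_sq)
    (by rw [nrd_lip]; linear_combination -h + d ^ 2 * hκ - κ * d ^ 2 * rt_sq)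

/-- Membership in the Lipschitz order `R + R i + R j + R k`, in a form convenient for
multiplication. -/
def IsLip (x : Quo) : Prop := ∃ (m : Rt) (s : Quo), x = C m + C rt * s ∧ rt ∣ s.tr

lemma IsLip.mul {x y : Quo} (hx : IsLip x) (hy : IsLip y) : IsLip (x * y) := by
  obtain ⟨m, s, rfl, hs⟩ := hx
  obtain ⟨n, t, rfl, ht⟩ := hy
  refine ⟨m * n, C m * t + C n * s + C rt * (s * t), ?_, ?_⟩
  · have e1 := C_comm s n
    have e2 := C_comm t m
    have e3 := C_comm s rt
    have e4 : C m * C rt = C rt * C m := by rw [← map_mul, mul_comm, map_mul]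
    simp only [mul_add, add_mul, map_mul]
    rw [mul_assoc (C rt) s (C n), ← e1, mul_assoc (C rt) s (C rt * t), ← mul_assoc s, ← e3,
      ← mul_assoc (C m) (C rt), e4]
    noncomm_ring
  · rw [tr_add, tr_add, tr_C_mul, tr_C_mul, tr_C_mul]
    exact dvd_add (dvd_add (ht.mul_left _) (hs.mul_left _)) (dvd_mul_right _ _)

lemma IsLip.add {x y : Quo} (hx : IsLip x) (hy : IsLip y) : IsLip (x + y) := by
  obtain ⟨m, s, rfl, hs⟩ := hx
  obtain ⟨n, t, rfl, ht⟩ := hy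
  refine ⟨m + n, s + t, ?_, ?_⟩
  · rw [map_add, mul_add]; abel
  · rw [tr_add]; exact dvd_add hs ht

lemma isLip_C (m : Rt) : IsLip (C m) := ⟨m, 0, by simp, by simp [tr]⟩

lemma isLip_two_mul (x : Quo) : IsLip (C 2 * x) :=
  ⟨0, C rt * x, by rw [map_zero, zero_add, ← mul_assoc, ← map_mul, rt_mul_rt],
    by rw [tr_C_mul]; exact dvd_mul_right _ _⟩

lemma IsLip.exists_lip {x : Quo} (hx : IsLip x) : ∃ x₀ x₁ x₂ x₃, x = lip x₀ x₁ x₂ x₃ := by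
  obtain ⟨m, s, rfl, k, hk⟩ := hx
  have hd : s.d = rt * (k - rt * s.a - s.b - s.c) := by
    rw [tr] at hk
    linear_combination hk + s.a * rt_sq
  obtain ⟨d₁, hd₁⟩ : ∃ d₁, d₁ = k - rt * s.a - s.b - s.c := ⟨_, rfl⟩
  rw [← hd₁] at hd
  refine ⟨m + rt * s.a + s.b + s.c + d₁, s.b + d₁, s.c + d₁, d₁, ?_⟩
  ext1 <;> simp only [add_a, add_b, add_c, add_d, C_mul_a, C_mul_b, C_mul_c, C_mul_d, C_a, C_b, C_c,
    C_d, lip, hd]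
  · ring
  · ring
  · ring
  · linear_combination d₁ * rt_sq

/-- Modulo `√2`, every element of odd norm is congruent to a unit of the order. -/
lemma exists_unit_add {x : Quo} (hx : ¬ rt ∣ x.nrd) : ∃ ρ s : Quo, ρ.nrd = 1 ∧ x = ρ + C rt * s := by
  have mk : ∀ ρ : Quo, ρ.nrd = 1 → rt ∣ x.a - ρ.a → rt ∣ x.b - ρ.b → rt ∣ x.c - ρ.c →
      rt ∣ x.d - ρ.d → ∃ ρ s : Quo, ρ.nrd = 1 ∧ x = ρ + C rt * s := by
    rintro ρ h ⟨a, ha⟩ ⟨b, hb⟩ ⟨c, hc⟩ ⟨d, hd⟩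
    refine ⟨ρ, ⟨a, b, c, d⟩, h, ?_⟩
    ext1 <;> simp only [add_a, add_b, add_c, add_d, C_mul_a, C_mul_b, C_mul_c, C_mul_d, ← ha, ← hb,
      ← hc, ← hd] <;> ring
  have hodd : ¬ Even (x.a.re ^ 2 + x.b.re ^ 2 + x.c.re ^ 2 + x.d.re ^ 2 + x.a.re * x.d.re
      + x.b.re * x.c.re) := by
    rw [rt_dvd_iff] at hx
    contrapose! hx
    have e : x.nrd.re = (x.a.re ^ 2 + x.b.re ^ 2 + x.c.re ^ 2 + x.d.re ^ 2 + x.a.re * x.d.re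
      + x.b.re * x.c.re) + 2 * (x.a.im ^ 2 + x.b.im ^ 2 + x.c.im ^ 2 + x.d.im ^ 2 + x.a.im * x.d.im
      + x.b.im * x.c.im + (x.a * x.b + x.a * x.c + x.b * x.d + x.c * x.d).im) := by
      simp [nrd, sq]; ring
    rw [e]
    exact hx.add (even_two_mul _)
  simp only [rt_dvd_iff, Zsqrtd.re_sub, Int.even_sub] at mk
  simp only [Int.even_add, Int.even_mul, Int.even_pow] at hodd
  have u1 : (⟨1, 0, 0, 0⟩ : Quo).nrd = 1 := by decide
  have u2 : (⟨0, 1, 0, 0⟩ : Quo).nrd = 1 := by decide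
  have u3 : (⟨0, 0, 1, 0⟩ : Quo).nrd = 1 := by decide
  have u4 : (⟨0, 0, 0, 1⟩ : Quo).nrd = 1 := by decide
  have u5 : (⟨-1, 0, 0, 1⟩ : Quo).nrd = 1 := by decide
  have u6 : (⟨-rt, 1, 1, 0⟩ : Quo).nrd = 1 := by decide
  by_cases ha : Even x.a.re <;> by_cases hb : Even x.b.re <;> by_cases hc : Even x.c.re <;>
  by_cases hd : Even x.d.re <;>
  first
  | (exfalso; apply hodd; simp [-Int.not_even_iff_odd, ha, hb, hc, hd]; done)
  | (refine mk _ u1 ?_ ?_ ?_ ?_ <;> simp [-Int.not_even_iff_odd, ha, hb, hc, hd]; done)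
  | (refine mk _ u2 ?_ ?_ ?_ ?_ <;> simp [-Int.not_even_iff_odd, ha, hb, hc, hd]; done)
  | (refine mk _ u3 ?_ ?_ ?_ ?_ <;> simp [-Int.not_even_iff_odd, ha, hb, hc, hd]; done)
  | (refine mk _ u4 ?_ ?_ ?_ ?_ <;> simp [-Int.not_even_iff_odd, ha, hb, hc, hd]; done)
  | (refine mk _ u5 ?_ ?_ ?_ ?_ <;> simp [-Int.not_even_iff_odd, ha, hb, hc, hd]; done)
  | (refine mk _ u6 ?_ ?_ ?_ ?_ <;> simp [-Int.not_even_iff_odd, ha, hb, hc, hd]; done)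

/-- An element of odd norm whose norm is congruent to a rational integer modulo `2` can be moved
into the Lipschitz order by a unit. -/
lemma exists_unit_mul {x : Quo} (hx : ¬ rt ∣ x.nrd) (him : Even x.nrd.im) :
    ∃ w : Quo, w.nrd = 1 ∧ IsLip (w * x) := by
  obtain ⟨ρ, s, hρ, hs⟩ := exists_unit_add hx
  have hρ' : ρ.conj.nrd = 1 := by
    have h := congrArg nrd ρ.mul_conj
    rw [nrd_mul, nrd_C, hρ] at h
    simpa using h
  have e : ρ.conj * x = C 1 + C rt * (ρ.conj * s) := by
    rw [hs, mul_add, conj_mul_self, hρ, ← mul_assoc, ← C_comm, mul_assoc]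
  refine ⟨ρ.conj, hρ', 1, ρ.conj * s, e, ?_⟩
  have h := congrArg nrd e
  rw [nrd_mul, hρ', one_mul, add_comm, nrd_add_C, tr_C_mul, nrd_mul, nrd_C, rt_sq] at h
  rw [h] at him
  rw [rt_dvd_iff]
  simpa [parity_simps] using him

end Quo
end FiveSq

/-! ### Gcds and units of `ℤ[√2]` -/

namespace FiveSq

/-- Euclidean division in `ℤ[√2]`. -/
lemma exists_quo_rem (x : Rt) {y : Rt} (hy : y ≠ 0) :
    ∃ s, (x - y * s).norm.natAbs < y.norm.natAbs := by
  have hN := norm_ne_zero' hy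
  obtain ⟨M, u, hM, hu, huN⟩ : ∃ (M : ℤ) (u : Rt), 0 < M ∧ y * u = (M : Rt) ∧ |y.norm| = M := by
    rcases lt_or_gt_of_ne hN with h | h
    · exact ⟨-y.norm, -star y, by omega, by rw [mul_neg, ← Zsqrtd.norm_eq_mul_conj]; simp,
        abs_of_neg h⟩
    · exact ⟨y.norm, star y, h, by rw [← Zsqrtd.norm_eq_mul_conj], abs_of_pos h⟩
  obtain ⟨p₀, c, hc, hc', H⟩ := round_one (x * u).re hM
  obtain ⟨p₁, d, hd, hd', G⟩ := round_one (x * u).im hM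
  obtain ⟨p, -, hp⟩ := H 0 (Or.inl rfl)
  obtain ⟨v, -, hv⟩ := G 0 (Or.inl rfl)
  refine ⟨⟨p, v⟩, ?_⟩
  have e : (x - y * ⟨p, v⟩) * u = ⟨(x * u).re - M * p, (x * u).im - M * v⟩ := by
    have : (x - y * ⟨p, v⟩) * u = x * u - (M : Rt) * ⟨p, v⟩ := by linear_combination (-⟨p, v⟩) * hu
    rw [this]; ext <;> simp
  have e2 := congrArg Zsqrtd.norm e
  have e3 := congrArg Zsqrtd.norm hu
  rw [Zsqrtd.norm_mul, Zsqrtd.norm_def (⟨(x * u).re - M * p, (x * u).im - M * v⟩ : Rt)] at e2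
  rw [Zsqrtd.norm_mul, Zsqrtd.norm_intCast] at e3
  have e4 : |u.norm| = M := by
    have := congrArg abs e3
    rw [abs_mul, huN, abs_mul, abs_of_pos hM] at this
    exact mul_left_cancel₀ hM.ne' this
  zify
  rw [huN]
  have e5 := congrArg abs e2
  rw [abs_mul, e4] at e5
  refine lt_of_mul_lt_mul_right (?_ : _ * M < M * M) hM.le
  rw [e5, abs_lt]
  constructor <;> simp only <;> nlinarith

/-- Bézout's identity in `ℤ[√2]`. -/
lemma exists_gcd (x y : Rt) : ∃ z p q x' y' : Rt, z = x * p + y * q ∧ x = z * x' ∧ y = z * y' := by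
  obtain ⟨k, hk⟩ : ∃ k : ℕ, y.norm.natAbs = k := ⟨_, rfl⟩
  induction k using Nat.strong_induction_on generalizing x y with
  | _ k ih =>
  by_cases hy : y = 0
  · exact ⟨x, 1, 0, 1, 0, by simp, by simp, by simp [hy]⟩
  · obtain ⟨s, hs⟩ := exists_quo_rem x hy
    obtain ⟨z, p, q, y', r', h1, h2, h3⟩ := ih _ (by omega) y (x - y * s) rfl
    exact ⟨z, q, p - s * q, y' * s + r', y', by rw [h1]; ring,
      by linear_combination s * h2 + h3, h2⟩

/-- The fundamental unit has norm `-1`, so every nonzero element is associated to a totally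
positive one. -/
lemma exists_unit_mul_TP {g : Rt} (hg : g ≠ 0) : ∃ u v : Rt, u * v = 1 ∧ TP (u * g) := by
  have key : ∀ h : Rt, 0 < h.norm → ∃ u v : Rt, u * v = 1 ∧ TP (u * h) := by
    intro h hh
    rcases lt_trichotomy h.re 0 with h1 | h1 | h1
    · exact ⟨-1, -1, by ring, by rw [neg_one_mul]; exact TP_of (by simpa) (by simpa using hh)⟩
    · rw [Zsqrtd.norm_def, h1] at hh; nlinarith [mul_self_nonneg h.im]
    · exact ⟨1, 1, by ring, by rw [one_mul]; exact TP_of h1 hh⟩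
  rcases lt_or_gt_of_ne (norm_ne_zero' hg) with h | h
  · obtain ⟨u, v, huv, ht⟩ := key (⟨1, 1⟩ * g) (by
      rw [Zsqrtd.norm_mul]; simp only [Zsqrtd.norm_def (⟨1, 1⟩ : Rt)]; linarith)
    refine ⟨u * ⟨1, 1⟩, v * ⟨-1, 1⟩, ?_, by rwa [mul_assoc]⟩
    have : (⟨1, 1⟩ : Rt) * ⟨-1, 1⟩ = 1 := by ext <;> simp
    calc u * ⟨1, 1⟩ * (v * ⟨-1, 1⟩) = (u * v) * (⟨1, 1⟩ * ⟨-1, 1⟩) := by ring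
      _ = 1 := by rw [huv, this, one_mul]
  · exact key g h

/-- Totally positive units are squares of units; `3 - 2√2 = (1 - √2)²` drives the descent. -/
lemma unit_sq {e : Rt} (hN : e.norm = 1) (hr : 0 < e.re) : ∃ u v : Rt, u * v = 1 ∧ e = u ^ 2 := by
  have key : ∀ (k : ℕ) (e : Rt), e.norm = 1 → 0 < e.re → 0 ≤ e.im → e.im.toNat = k →
      ∃ u v : Rt, u * v = 1 ∧ e = u ^ 2 := by
    intro k
    induction k using Nat.strong_induction_on with
    | _ k ih =>
    intro e hN hr hi hk
    rw [Zsqrtd.norm_def] at hN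
    rcases hi.eq_or_lt with h0 | h0
    · rw [← h0] at hN
      have : e.re = 1 := by nlinarith
      exact ⟨1, 1, by ring, by ext <;> simp [this, ← h0]⟩
    · have h1 : e.im ≠ 1 := by
        intro h1
        rw [h1] at hN
        have : e.re < 2 := by nlinarith
        have : e.re = 1 := by omega
        rw [this] at hN; omega
      have h2 : 2 ≤ e.im := by omega
      have a1 : e.re < 2 * e.im := by nlinarith
      have a2 : 2 * e.re ≤ 3 * e.im := by nlinarith
      have a3 : 4 * e.im < 3 * e.re := by nlinarith
      have a4 : e.im < e.re := by nlinarith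
      obtain ⟨u, v, huv, hu⟩ := ih (3 * e.im - 2 * e.re).toNat (by omega)
        ⟨3 * e.re - 4 * e.im, 3 * e.im - 2 * e.re⟩
        (by rw [Zsqrtd.norm_def]; simp only; linear_combination hN) (by simp only; omega)
        (by simp only; omega) rfl
      have c1 : (⟨1, 1⟩ : Rt) * ⟨-1, 1⟩ = 1 := by ext <;> simp
      refine ⟨u * ⟨1, 1⟩, v * ⟨-1, 1⟩, ?_, ?_⟩
      · calc u * ⟨1, 1⟩ * (v * ⟨-1, 1⟩) = (u * v) * (⟨1, 1⟩ * ⟨-1, 1⟩) := by ring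
          _ = 1 := by rw [huv, c1, one_mul]
      · rw [mul_pow, ← hu]
        ext <;> simp [sq] <;> ring
  by_cases hi : 0 ≤ e.im
  · exact key _ e hN hr hi rfl
  · obtain ⟨u, v, huv, hu⟩ := key _ (star e) (by rw [Zsqrtd.norm_conj, hN]) (by simpa)
      (by simp; omega) rfl
    refine ⟨star u, star v, by rw [← star_mul', huv, star_one], ?_⟩
    rw [← star_pow, ← hu, star_star]

lemma unit_sq' {e e' : Rt} (h : e * e' = 1) (he : TP e) : ∃ u v : Rt, u * v = 1 ∧ e = u ^ 2 := by
  have hN := he.norm_pos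
  have := congrArg Zsqrtd.norm h
  rw [Zsqrtd.norm_mul, Zsqrtd.norm_one] at this
  refine unit_sq ?_ he.re_pos
  rcases Int.isUnit_iff.1 (IsUnit.of_mul_eq_one _ this) with h | h <;> omega

end FiveSq

/-! ### Forms with an odd coefficient are sums of four squares -/

namespace FiveSq
namespace Quo

lemma conj_conj (x : Quo) : x.conj.conj = x := by
  ext1 <;> simp [tr]; ring

lemma conj_C (m : Rt) : (C m).conj = C m := by
  ext1 <;> simp [tr]; ring

lemma nrd_conj (x : Quo) : x.conj.nrd = x.nrd := by
  have := rt_sq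
  simp only [nrd, conj_a, conj_b, conj_c, conj_d, tr]; grind

lemma nrd_add (x y : Quo) : (x + y).nrd = x.nrd + y.nrd + (x * y.conj).tr := by
  have := rt_sq
  rw [tr]
  simp only [nrd, mul_a, mul_b, mul_c, mul_d, add_a, add_b, add_c, add_d,
    conj_a, conj_b, conj_c, conj_d, tr]; grind

/-- An odd element is `1` modulo `2` as soon as its `√2`-coordinate is even. -/
lemma odd_eq {α : Rt} (hα : ¬ rt ∣ α) (him : Even α.im) : ∃ κ : Rt, α = 1 + 2 * κ := by
  rw [rt_dvd_iff, Int.not_even_iff_odd] at hα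
  obtain ⟨k, hk⟩ := hα
  obtain ⟨l, hl⟩ := him
  exact ⟨⟨k, l⟩, by ext <;> simp <;> omega⟩

lemma rt_dvd_mul {x y : Rt} : rt ∣ x * y ↔ rt ∣ x ∨ rt ∣ y := by
  simp only [rt_dvd_iff, Zsqrtd.re_mul]
  rw [Int.even_add, mul_assoc, Int.even_mul, Int.even_mul]; simp

/-- If the form `(α, β, γ)` is primitive with `α` odd, a quaternion of trace `2β` and norm `αγ`
factors as `ā b` with `a` of norm `α`: up to a unit, `ā` generates the right ideal generated by `α`
and `q`, whose norm is associated to `α` by primitivity. -/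
lemma exists_factor {α β γ x y z : Rt} {q : Quo} (hα : TP α) (hodd : ¬ rt ∣ α)
    (hbez : α * x + β * y + γ * z = 1) (ht : q.tr = 2 * β) (hn : q.nrd = α * γ) :
    ∃ a b : Quo, a.nrd = α ∧ a.conj * b = q := by
  obtain ⟨X, p, r, m', q', h1, h2, h3⟩ := exists_gcd (C α) q
  have hX : X ≠ 0 := by
    rintro rfl; rw [zero_mul] at h2; exact C_ne_zero hα.ne_zero h2
  have d1 : α ∣ X.nrd := by
    rw [h1, nrd_add, nrd_mul, nrd_C, nrd_mul, hn, mul_assoc (C α), tr_C_mul]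
    exact ⟨α * p.nrd + γ * r.nrd + (p * (q * r).conj).tr, by ring⟩
  have d2 : X.nrd ∣ α ^ 2 := by
    rw [← nrd_C, h2, nrd_mul]; exact dvd_mul_right _ _
  have d3 : X.nrd ∣ α * γ := by
    rw [← hn, h3, nrd_mul]; exact dvd_mul_right _ _
  have d4 : X.nrd ∣ α * (2 * β) := by
    refine ⟨(m'.conj * q').tr, ?_⟩
    rw [← ht, ← tr_C_mul, ← tr_C_mul, ← conj_C α, h2, h3, conj_mul, mul_assoc,
      ← mul_assoc X.conj, conj_mul_self, ← mul_assoc, ← C_comm, mul_assoc]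
  have d5 : X.nrd ∣ α := by
    obtain ⟨κ, hκ⟩ := odd_eq (α := α ^ 2)
      (by rw [sq, rt_dvd_mul]; tauto) (im_sq_even α)
    obtain ⟨u, hu⟩ := d2
    obtain ⟨v, hv⟩ := d3
    obtain ⟨w, hw⟩ := d4
    refine ⟨u * x + y * (u * α * β - κ * w) + v * z, ?_⟩
    linear_combination (-α) * hbez + x * hu + z * hv - y * κ * hw + α * β * y * hu
      - α * β * y * hκ
  obtain ⟨e, he⟩ := d1
  obtain ⟨e', he'⟩ := d5
  have hee : e * e' = 1 := by
    apply mul_left_cancel₀ hα.ne_zero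
    linear_combination -he' - e' * he
  have hTe : TP e := hα.of_mul (by rw [← he]; exact TP_nrd hX)
  obtain ⟨u, v, huv, heu⟩ := unit_sq' hee hTe
  refine ⟨X.conj * C v, C u * q', ?_, ?_⟩
  · rw [nrd_mul, nrd_conj, nrd_C, he, heu]
    linear_combination α * (u * v + 1) * huv
  · rw [conj_mul, conj_C, conj_conj, mul_assoc, ← mul_assoc X, ← C_comm, mul_assoc, ← h3,
      ← mul_assoc, ← map_mul, mul_comm v u, huv, map_one, one_mul]

/-- A factorization `ā b = q` with `q` in the Lipschitz order and `a` of odd norm can be moved into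
the Lipschitz order by a unit of norm `1`. -/
lemma exists_lip_factor {α : Rt} {a b q : Quo} (hodd : ¬ rt ∣ α) (him : Even α.im)
    (ha : a.nrd = α) (hab : a.conj * b = q) (hq : IsLip q) :
    ∃ a' b' : Quo, IsLip a' ∧ IsLip b' ∧ a'.nrd = α ∧ a'.conj * b' = q := by
  obtain ⟨w, hw, hL⟩ := exists_unit_mul (x := a) (by rwa [ha]) (by rwa [ha])
  obtain ⟨κ, hκ⟩ := odd_eq hodd him
  have hn : (w * a).nrd = α := by rw [nrd_mul, hw, ha, one_mul]
  have hc : (w * a).conj * (w * b) = q := by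
    rw [conj_mul, mul_assoc, ← mul_assoc w.conj, conj_mul_self, hw, map_one, one_mul, hab]
  refine ⟨w * a, w * b, hL, ?_, hn, hc⟩
  have h1 : IsLip (C α * (w * b)) := by
    rw [← hn, ← mul_conj, mul_assoc, hc]; exact hL.mul hq
  have h2 : w * b = C α * (w * b) + C 2 * (C (-κ) * (w * b)) := by
    rw [hκ]; simp only [map_add, map_mul, map_one, map_neg]; noncomm_ring
  rw [h2]
  exact h1.add (isLip_two_mul _)

/-- A Lipschitz quaternion of trace `0` and prescribed norm `D`. -/
lemma exists_isLip_pure {D : Rt} (hD : D = 0 ∨ TP D) (him : Even D.im) :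
    ∃ y : Quo, IsLip y ∧ y.tr = 0 ∧ y.nrd = D := by
  rcases hD with rfl | hD
  · exact ⟨0, by simpa using isLip_C 0, by simp [tr], nrd_zero⟩
  · obtain ⟨l, hl⟩ := him
    rcases Int.even_or_odd D.re with ⟨k, hk⟩ | ⟨k, hk⟩
    · have h2 : D = 2 * ⟨k, l⟩ := by ext <;> simp <;> omega
      have h2T : TP (2 : Rt) := by exact_mod_cast TP_intCast (a := 2) (by norm_num)
      obtain ⟨s, hs, hs'⟩ := exists_pure (h2T.of_mul (by rwa [← h2]))
      refine ⟨C rt * s, ⟨0, s, by simp, by rw [hs]; exact dvd_zero _⟩, ?_, ?_⟩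
      · rw [tr_C_mul, hs, mul_zero]
      · rw [nrd_mul, nrd_C, rt_sq, hs', h2]
    · have h2 : 1 + D = 2 * ⟨k + 1, l⟩ := by ext <;> simp <;> omega
      obtain ⟨s, hs, hs'⟩ := exists_half hD h2
      refine ⟨C rt * s + C (-1), ⟨-1, s, add_comm _ _, by rw [hs]⟩, ?_, ?_⟩
      · rw [tr_add, tr_C_mul, tr_C, hs, rt_mul_rt]; ring
      · rw [nrd_add_C, nrd_mul, nrd_C, tr_C_mul, hs, hs', rt_mul_rt, rt_sq, ← h2]; ring

end Quo

open Quo in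
/-- A positive semidefinite form whose leading coefficient is odd and which satisfies the parity
condition for sums of squares is a sum of four squares of linear forms. -/
lemma four_of_odd {α β γ : Rt} (hα : TP α) (hodd : ¬ rt ∣ α) (hα' : Even α.im) (hγ' : Even γ.im)
    (hD : α * γ - β ^ 2 = 0 ∨ TP (α * γ - β ^ 2)) :
    ∃ e f : Fin 4 → Rt, α = ∑ i, e i ^ 2 ∧ β = ∑ i, e i * f i ∧ γ = ∑ i, f i ^ 2 := by
  -- the content `g` of the form, normalized to be totally positive
  obtain ⟨g, α₁, β₁, γ₁, x, y, z, hg, rfl, rfl, rfl, hbez⟩ : ∃ g α₁ β₁ γ₁ x y z : Rt, TP g ∧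
      α = g * α₁ ∧ β = g * β₁ ∧ γ = g * γ₁ ∧ α₁ * x + β₁ * y + γ₁ * z = 1 := by
    obtain ⟨h, p, q, α₀, β₀, h1, h2, h3⟩ := FiveSq.exists_gcd α β
    obtain ⟨k, r, s, h₀, γ₀, k1, k2, k3⟩ := FiveSq.exists_gcd h γ
    have hk : k ≠ 0 := by
      rintro rfl; apply hα.ne_zero; rw [h2, k2]; ring
    obtain ⟨u, v, huv, hT⟩ := exists_unit_mul_TP hk
    refine ⟨u * k, v * h₀ * α₀, v * h₀ * β₀, v * γ₀, u * p * r, u * q * r, u * s, hT, ?_, ?_, ?_, ?_⟩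
    · linear_combination h2 + α₀ * k2 - k * h₀ * α₀ * huv
    · linear_combination h3 + β₀ * k2 - k * h₀ * β₀ * huv
    · linear_combination k3 - k * γ₀ * huv
    · apply mul_left_cancel₀ hk
      linear_combination (u * v) * (-(p * r) * h2 - (p * r * α₀) * k2 - (q * r) * h3
        - (q * r * β₀) * k2 - s * k3 - r * h1 - k1) + k * huv
  have hα₁ : TP α₁ := hg.of_mul hα
  have hodd' := hodd
  rw [rt_dvd_mul, not_or] at hodd'
  have hDe : g * α₁ * (g * γ₁) - (g * β₁) ^ 2 = g ^ 2 * (α₁ * γ₁ - β₁ ^ 2) := by ring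
  have hD₁ : α₁ * γ₁ - β₁ ^ 2 = 0 ∨ TP (α₁ * γ₁ - β₁ ^ 2) := by
    rw [hDe] at hD
    rcases hD with h | h
    · exact Or.inl ((mul_eq_zero.1 h).resolve_left (TP_sq hg.ne_zero).ne_zero)
    · exact Or.inr ((TP_sq hg.ne_zero).of_mul h)
  have hDi : Even (α₁ * γ₁ - β₁ ^ 2).im := by
    have e1 : Even (g * α₁ * (g * γ₁) - (g * β₁) ^ 2).im := by
      rw [Zsqrtd.im_sub, Zsqrtd.im_mul (g * α₁)]
      exact ((hγ'.mul_left _).add (hα'.mul_right _)).sub (im_sq_even _)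
    have e2 : ¬ Even (g ^ 2).re := by
      rw [← rt_dvd_iff, sq, rt_dvd_mul]; tauto
    have e3 := im_sq_even g
    rw [hDe, Zsqrtd.im_mul, Int.even_add, Int.even_mul, Int.even_mul] at e1
    tauto
  obtain ⟨y₁, hy₁, hyt, hyn⟩ := exists_isLip_pure hD₁ hDi
  have hqL : IsLip (y₁ + C β₁) := hy₁.add (isLip_C _)
  have hqt : (y₁ + C β₁).tr = 2 * β₁ := by rw [tr_add, hyt, tr_C, zero_add]
  have hqn : (y₁ + C β₁).nrd = α₁ * γ₁ := by rw [nrd_add_C, hyt, hyn]; ring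
  obtain ⟨a₁, b₁, ha₁, hab₁⟩ := exists_factor hα₁ hodd'.2 hbez hqt hqn
  obtain ⟨t, -, htn⟩ := exists_pure hg
  obtain ⟨a, b, haL, hbL, han, hab⟩ := exists_lip_factor (a := t * a₁) (b := t * b₁)
    (q := C g * (y₁ + C β₁)) hodd hα' (by rw [nrd_mul, htn, ha₁])
    (by rw [conj_mul, mul_assoc, ← mul_assoc t.conj, conj_mul_self, htn, C_comm,
          ← mul_assoc, hab₁, ← C_comm]) ((isLip_C g).mul hqL)
  have hbn : b.nrd = g * γ₁ := by
    have := congrArg nrd hab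
    rw [nrd_mul, nrd_conj, han, nrd_mul, nrd_C, hqn] at this
    apply mul_left_cancel₀ hα.ne_zero
    linear_combination this
  have habt := congrArg tr hab
  rw [tr_C_mul, hqt] at habt
  obtain ⟨e₀, e₁, e₂, e₃, rfl⟩ := haL.exists_lip
  obtain ⟨f₀, f₁, f₂, f₃, rfl⟩ := hbL.exists_lip
  rw [nrd_lip] at han hbn
  rw [tr_conj_lip] at habt
  refine ⟨![e₀, e₁, e₂, e₃], ![f₀, f₁, f₂, f₃], ?_, ?_, ?_⟩
  · simp [Fin.sum_univ_four, ← han]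
  · apply mul_left_cancel₀ two_ne_zero'
    simp only [Fin.sum_univ_four, Matrix.cons_val]
    linear_combination -habt
  · simp [Fin.sum_univ_four, ← hbn]

end FiveSq

/-! ### Reduction of arbitrary forms to the odd case -/

namespace FiveSq

lemma im_sum_sq_even {ι : Type*} (s : Finset ι) (a : ι → Rt) : Even (∑ i ∈ s, a i ^ 2).im := by
  induction s using Finset.cons_induction with
  | empty => simp
  | cons i s hi ih => rw [Finset.sum_cons, Zsqrtd.im_add]; exact (im_sq_even _).add ih

/-- By the Cauchy-Schwarz inequality in both real embeddings, the determinant of a sum of squares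
is zero or totally positive. -/
lemma det_nonneg {ι : Type*} (s : Finset ι) (a b : ι → Rt) :
    (∑ i ∈ s, a i ^ 2) * (∑ i ∈ s, b i ^ 2) - (∑ i ∈ s, a i * b i) ^ 2 = 0 ∨
      TP ((∑ i ∈ s, a i ^ 2) * (∑ i ∈ s, b i ^ 2) - (∑ i ∈ s, a i * b i) ^ 2) := by
  refine or_iff_not_imp_left.2 fun h => TP_of_nonneg h ?_ ?_ <;>
  · simp only [map_sub, map_mul, map_pow, map_sum, sub_nonneg]
    exact Finset.sum_mul_sq_le_sq_mul_sq _ _ _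

lemma TP_sum_sq {ι : Type*} (s : Finset ι) (a : ι → Rt) (h : ¬ rt ∣ ∑ i ∈ s, a i ^ 2) :
    TP (∑ i ∈ s, a i ^ 2) := by
  refine TP_of_nonneg (fun h0 => h (h0 ▸ dvd_zero _)) ?_ ?_ <;>
  · simp only [map_pow, map_sum]
    exact Finset.sum_nonneg fun _ _ => sq_nonneg _

/-- A sum of squares of linear forms with an odd diagonal coefficient is a sum of four. -/
lemma four_of_sum {ι : Type*} (s : Finset ι) (a b : ι → Rt)
    (h : ¬ rt ∣ ∑ i ∈ s, a i ^ 2 ∨ ¬ rt ∣ ∑ i ∈ s, b i ^ 2) :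
    ∃ e f : Fin 4 → Rt, ∑ i ∈ s, a i ^ 2 = ∑ i, e i ^ 2 ∧
      ∑ i ∈ s, a i * b i = ∑ i, e i * f i ∧ ∑ i ∈ s, b i ^ 2 = ∑ i, f i ^ 2 := by
  rcases h with h | h
  · exact four_of_odd (TP_sum_sq s a h) h (im_sum_sq_even s a) (im_sum_sq_even s b)
      (det_nonneg s a b)
  · obtain ⟨e, f, h1, h2, h3⟩ := four_of_odd (β := ∑ i ∈ s, b i * a i) (TP_sum_sq s b h) h
      (im_sum_sq_even s b) (im_sum_sq_even s a) (det_nonneg s b a)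
    refine ⟨f, e, h3, ?_, h1⟩
    simp_rw [mul_comm (a _), mul_comm (f _)]; exact h2

lemma exists_five {n : ℕ} (a b : Fin n → Rt) :
    ∃ e f : Fin 5 → Rt, ∑ i, a i ^ 2 = ∑ i, e i ^ 2 ∧
      ∑ i, a i * b i = ∑ i, e i * f i ∧ ∑ i, b i ^ 2 = ∑ i, f i ^ 2 := by
  -- a form that is divisible by `2` may be halved, so induct on its size
  obtain ⟨K, hK⟩ : ∃ K : ℕ, (∑ i, (a i ^ 2 + b i ^ 2)).re.toNat = K := ⟨_, rfl⟩
  induction K using Nat.strong_induction_on generalizing a b with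
  | _ K ih =>
  by_cases h : ¬ rt ∣ ∑ i, a i ^ 2 ∨ ¬ rt ∣ ∑ i, b i ^ 2
  · obtain ⟨e, f, h1, h2, h3⟩ := four_of_sum Finset.univ a b h
    exact ⟨Fin.cons 0 e, Fin.cons 0 f, by simp [Fin.sum_univ_succ (n := 4), h1],
      by simp [Fin.sum_univ_succ (n := 4), h2], by simp [Fin.sum_univ_succ (n := 4), h3]⟩
  push Not at h
  by_cases hi : ∃ i, ¬ rt ∣ a i ∨ ¬ rt ∣ b i
  · -- splitting off one odd linear form leaves a form with an odd diagonal coefficient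
    obtain ⟨j, hj⟩ := hi
    have key : ∀ c : Fin n → Rt, rt ∣ ∑ i, c i ^ 2 → ¬ rt ∣ c j →
        ¬ rt ∣ ∑ i ∈ Finset.univ.erase j, c i ^ 2 := by
      intro c hc hcj h'
      rw [← Finset.sum_erase_add _ _ (Finset.mem_univ j), dvd_add_right h', sq,
        Quo.rt_dvd_mul] at hc
      tauto
    obtain ⟨e, f, h1, h2, h3⟩ := four_of_sum (Finset.univ.erase j) a b
      (hj.imp (key a h.1) (key b h.2))
    refine ⟨Fin.cons (a j) e, Fin.cons (b j) f, ?_, ?_, ?_⟩ <;>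
      rw [← Finset.add_sum_erase _ _ (Finset.mem_univ j)] <;>
      simp [Fin.sum_univ_succ (n := 4), h1, h2, h3]
  · push Not at hi
    choose a' ha' using fun i => (hi i).1
    choose b' hb' using fun i => (hi i).2
    have e1 : ∑ i, a i ^ 2 = 2 * ∑ i, a' i ^ 2 := by
      rw [Finset.mul_sum]; exact Finset.sum_congr rfl fun i _ => by rw [ha', mul_pow, rt_sq]
    have e2 : ∑ i, a i * b i = 2 * ∑ i, a' i * b' i := by
      rw [Finset.mul_sum]
      exact Finset.sum_congr rfl fun i _ => by rw [ha', hb', ← rt_sq]; ring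
    have e3 : ∑ i, b i ^ 2 = 2 * ∑ i, b' i ^ 2 := by
      rw [Finset.mul_sum]; exact Finset.sum_congr rfl fun i _ => by rw [hb', mul_pow, rt_sq]
    by_cases h0 : ∀ i, a i = 0 ∧ b i = 0
    · exact ⟨0, 0, by simp [h0], by simp [h0], by simp [h0]⟩
    · push Not at h0
      obtain ⟨j, hj⟩ := h0
      have hpos : 0 < (∑ i, (a' i ^ 2 + b' i ^ 2)).re := by
        have hre : ∀ x : Rt, 0 ≤ (x ^ 2).re := fun x => by
          simp only [sq, Zsqrtd.re_mul]; nlinarith [mul_self_nonneg x.re, mul_self_nonneg x.im]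
        have hre' : ∀ x : Rt, x ≠ 0 → 0 < (x ^ 2).re := fun x hx => (TP_sq hx).re_pos
        have : (∑ i, (a' i ^ 2 + b' i ^ 2)).re = ∑ i, ((a' i ^ 2).re + (b' i ^ 2).re) := by
          generalize (Finset.univ : Finset (Fin n)) = s
          induction s using Finset.cons_induction with
          | empty => simp
          | cons i s hi ih => rw [Finset.sum_cons, Finset.sum_cons, Zsqrtd.re_add, ih, Zsqrtd.re_add]
        rw [this]
        refine Finset.sum_pos' (fun i _ => add_nonneg (hre _) (hre _)) ⟨j, Finset.mem_univ _, ?_⟩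
        by_cases haj : a' j = 0
        · have : b' j ≠ 0 := by
            intro hbj; exact hj (by rw [ha', haj, mul_zero]) (by rw [hb', hbj, mul_zero])
          exact add_pos_of_nonneg_of_pos (hre _) (hre' _ this)
        · exact add_pos_of_pos_of_nonneg (hre' _ haj) (hre _)
      have hsum : (∑ i, (a i ^ 2 + b i ^ 2)).re = 2 * (∑ i, (a' i ^ 2 + b' i ^ 2)).re := by
        rw [Finset.sum_add_distrib, e1, e3, ← mul_add, ← Finset.sum_add_distrib]; simp
      obtain ⟨e, f, h1, h2, h3⟩ := ih _ (by omega) a' b' rfl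
      refine ⟨fun i => rt * e i, fun i => rt * f i, ?_, ?_, ?_⟩
      · simp_rw [e1, h1, mul_pow, rt_sq, Finset.mul_sum]
      · rw [e2, h2, ← rt_sq, Finset.mul_sum]; exact Finset.sum_congr rfl fun i _ => by ring
      · simp_rw [e3, h3, mul_pow, rt_sq, Finset.mul_sum]

end FiveSq

/-- Let `R = ℤ[√2]`.  Every binary quadratic form over `R` that is a sum of
finitely many squares of linear forms over `R` is a sum of `5` squares of linear forms
over `R`. -/
theorem sum_of_squares_of_linear_forms_is_sum_of_five (α β γ : Zsqrtd 2)
    (h : ∃ n : ℕ, IsSumOfLinSq n α β γ) : IsSumOfLinSq 5 α β γ := by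
  obtain ⟨n, a, b, rfl, rfl, rfl⟩ := h
  obtain ⟨e, f, h1, h2, h3⟩ := FiveSq.exists_five a b
  exact ⟨e, f, h1, by rw [h2], h3⟩
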